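/- arXiv:1203.6498 — 2 statements merged into one kernel-verified Lean document; each statement's English description precedes it below -/
import Mathlib

section
/- Let K be an algebraically closed field equipped with a valuation v : K → Γ₀ into a linearly ordered commutative group with zero, such that v is nontrivial (there exists a ∈ K with v(a) ≠ 0 and v(a) ≠ 1), and endow K with the valuation topology. Let m ≥ 0, let I be a prime ideal of the polynomial ring K[X₁,…,X_m], and let Z = {x ∈ K^m : p(x) = 0 for every p ∈ I}, endowed with the topology induced from the product of the valuation topology on K^m. Then for every nonempty open subset U of Z and every polynomial h ∈ K[X₁,…,X_m] with h ∉ I, there exists a point x ∈ U with h(x) ≠ 0. -/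
/-!
By Noether normalization the coordinate ring `R = K[X₁,…,X_m]/I` is integral over a polynomial
ring `A = K[Y₁,…,Y_s]`, so the points of `Z`, i.e. the `K`-algebra maps `R → K`, project to `K^s`.
The heart of the proof is that this projection is open for the valuation topologies
(`eventually_exists_point_near`). Granting this, let `a ∈ A` be a nonzero multiple of `h` in `R`.
The image of `U` contains a box with infinite sides, hence a point where `a` does not vanish, and
`h` does not vanish at any point above it.

For openness at a point `z` above `y`, let `P i` be the minimal polynomial over `A` of the `i`-th
coordinate, specialized at `y`, and write `P i = (T - z i) ^ e * q i` with `q i` nonzero at `z i`.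
Put `t = ∏ i, q i (x i)`. Since `A` is integrally closed, every root of the minimal polynomial of
`t` specialized at `y'` is the value of `t` at a point above `y'` (`exists_point_over`). By
continuity of roots, for `y'` near `y` there is thus a point `z'` above `y'` with `t(z')` near
`t(z) ≠ 0`. The coordinates of `z'` are bounded and `P i (z' i)` is small, so
`(z' i - z i) ^ e * t(z')`, a bounded multiple of `P i (z' i)`, is small; as `t(z')` is bounded
away from `0`, the point `z'` is near `z`.
-/

open Filter Topology Polynomial

/-! ### Limits, bounds and roots in a valued field -/

section Valued

variable {K : Type*} [Field K] {Γ₀ : Type*} [LinearOrderedCommGroupWithZero Γ₀] [Valued K Γ₀]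

/-- Over a field, the balls whose radius is the value of a nonzero element form a neighborhood
basis, so radii can be multiplied and divided inside `K`. -/
theorem valued_mem_nhds_iff {s : Set K} {a : K} :
    s ∈ 𝓝 a ↔ ∃ c : K, c ≠ 0 ∧ {x | Valued.v (x - a) < (Valued.v c : Γ₀)} ⊆ s := by
  rw [Valued.mem_nhds]
  constructor
  · rintro ⟨γ, hγ⟩
    obtain ⟨c, hc⟩ := MonoidWithZeroHom.ValueGroup₀.restrict₀_surjective
      (.ofClass (Valued.v : Valuation K Γ₀)) γ.1
    have hc' : (Valued.v : Valuation K Γ₀).restrict c = γ.1 := hc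
    refine ⟨c, ?_, ?_⟩
    · rintro rfl
      exact γ.ne_zero (by rw [← hc', map_zero])
    · intro x hx
      apply hγ
      change (Valued.v : Valuation K Γ₀).restrict (x - a) < _
      rw [← hc']
      exact (Valued.v : Valuation K Γ₀).restrict_lt_iff.mpr hx
  · rintro ⟨c, hc, h⟩
    have hc' : (Valued.v : Valuation K Γ₀).restrict c ≠ 0 := by simpa using hc
    refine ⟨Units.mk0 _ hc', fun x hx => h ?_⟩
    exact (Valued.v : Valuation K Γ₀).restrict_lt_iff.mp hx

theorem valued_tendsto_iff {α : Type*} {l : Filter α} {f : α → K} {a : K} :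
    Tendsto f l (𝓝 a) ↔
      ∀ c : K, c ≠ 0 → ∀ᶠ x in l, Valued.v (f x - a) < (Valued.v c : Γ₀) := by
  constructor
  · intro h c hc
    exact h (valued_mem_nhds_iff.mpr ⟨c, hc, subset_rfl⟩)
  · intro h s hs
    obtain ⟨c, hc, hcs⟩ := valued_mem_nhds_iff.mp hs
    exact (h c hc).mono fun x hx => hcs hx

theorem valued_infinite_of_mem_nhds (hnt : ∃ a : K, Valued.v a ≠ (0 : Γ₀) ∧ Valued.v a ≠ (1 : Γ₀))
    {s : Set K} {a : K} (hs : s ∈ 𝓝 a) : s.Infinite := by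
  obtain ⟨b, hb0, hb1⟩ : ∃ b : K, b ≠ 0 ∧ Valued.v b < (1 : Γ₀) := by
    obtain ⟨a, h0, h1⟩ := hnt
    have ha : a ≠ 0 := by rintro rfl; simp at h0
    rcases lt_or_gt_of_ne h1 with h | h
    · exact ⟨a, ha, h⟩
    · exact ⟨a⁻¹, inv_ne_zero ha, by rw [map_inv₀]; exact inv_lt_one_of_one_lt₀ h⟩
  have : (𝓝[≠] a).NeBot := by
    rw [← mem_closure_iff_nhdsWithin_neBot, mem_closure_iff_nhds]
    intro t ht
    obtain ⟨c, hc, hct⟩ := valued_mem_nhds_iff.mp ht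
    refine ⟨a + b * c, hct ?_, by simp [hb0, hc]⟩
    have : (0 : Γ₀) < Valued.v c := by simpa [zero_lt_iff] using hc
    simpa using mul_lt_of_lt_one_left this hb1
  exact infinite_of_mem_nhds a hs

/-- `f` is eventually bounded along `l`, the bound being the valuation of a nonzero element
of `K`. -/
def EventuallyVBounded {α : Type*} (l : Filter α) (f : α → K) : Prop :=
  ∃ c : K, c ≠ 0 ∧ ∀ᶠ x in l, Valued.v (f x) ≤ (Valued.v c : Γ₀)

namespace EventuallyVBounded

variable {α : Type*} {l : Filter α} {f g : α → K}

theorem of_tendsto {a : K} (h : Tendsto f l (𝓝 a)) : EventuallyVBounded l f := by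
  by_cases ha : a = 0
  · subst ha
    refine ⟨1, one_ne_zero, ?_⟩
    filter_upwards [valued_tendsto_iff.mp h 1 one_ne_zero] with x hx
    simpa using hx.le
  · refine ⟨a, ha, ?_⟩
    filter_upwards [valued_tendsto_iff.mp h a ha] with x hx
    exact (Valuation.map_eq_of_sub_lt _ hx).le

theorem const (a : K) : EventuallyVBounded l (fun _ : α => a) := of_tendsto tendsto_const_nhds

theorem add (hf : EventuallyVBounded l f) (hg : EventuallyVBounded l g) :
    EventuallyVBounded l (fun x => f x + g x) := by
  obtain ⟨c, hc, hf⟩ := hf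
  obtain ⟨d, hd, hg⟩ := hg
  rcases le_total (Valued.v c : Γ₀) (Valued.v d) with h | h
  · refine ⟨d, hd, ?_⟩
    filter_upwards [hf, hg] with x h1 h2
    exact Valuation.map_add_le _ (h1.trans h) h2
  · refine ⟨c, hc, ?_⟩
    filter_upwards [hf, hg] with x h1 h2
    exact Valuation.map_add_le _ h1 (h2.trans h)

theorem mul (hf : EventuallyVBounded l f) (hg : EventuallyVBounded l g) :
    EventuallyVBounded l (fun x => f x * g x) := by
  obtain ⟨c, hc, hf⟩ := hf
  obtain ⟨d, hd, hg⟩ := hg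
  refine ⟨c * d, mul_ne_zero hc hd, ?_⟩
  filter_upwards [hf, hg] with x h1 h2
  rw [map_mul, map_mul]
  exact mul_le_mul' h1 h2

theorem pow (hf : EventuallyVBounded l f) (n : ℕ) : EventuallyVBounded l (fun x => f x ^ n) := by
  induction n with
  | zero => simpa using const (l := l) (1 : K)
  | succ n ih => simpa only [pow_succ] using ih.mul hf

theorem prod {ι : Type*} (s : Finset ι) {F : ι → α → K}
    (hF : ∀ i ∈ s, EventuallyVBounded l (F i)) :
    EventuallyVBounded l (fun x => ∏ i ∈ s, F i x) := by
  classical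
  induction s using Finset.induction_on with
  | empty => simpa using const (l := l) (1 : K)
  | insert i s hi ih =>
    simp only [Finset.prod_insert hi]
    exact (hF i (Finset.mem_insert_self i s)).mul
      (ih fun j hj => hF j (Finset.mem_insert_of_mem hj))

theorem polynomial_eval (hf : EventuallyVBounded l f) (q : K[X]) :
    EventuallyVBounded l (fun x => q.eval (f x)) := by
  induction q using Polynomial.induction_on' with
  | add p q hp hq => simpa using hp.add hq
  | monomial n a => simpa using (const a).mul (hf.pow n)

theorem tendsto_mul_zero (hf : Tendsto f l (𝓝 0)) (hg : EventuallyVBounded l g) :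
    Tendsto (fun x => f x * g x) l (𝓝 0) := by
  obtain ⟨d, hd, hg⟩ := hg
  rw [valued_tendsto_iff] at hf ⊢
  intro c hc
  filter_upwards [hf (c / d) (div_ne_zero hc hd), hg] with x h1 h2
  have hd' : (0 : Γ₀) < Valued.v d := by simpa [zero_lt_iff] using hd
  rw [sub_zero] at h1 ⊢
  rw [map_div₀, lt_div_iff₀ hd'] at h1
  rw [map_mul]
  exact (mul_le_mul_right h2 _).trans_lt h1

end EventuallyVBounded

theorem tendsto_zero_of_pow {α : Type*} {l : Filter α} {f : α → K} {n : ℕ}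
    (h : Tendsto (fun x => f x ^ n) l (𝓝 0)) : Tendsto f l (𝓝 0) := by
  rw [valued_tendsto_iff] at h ⊢
  intro c hc
  filter_upwards [h (c ^ n) (pow_ne_zero n hc)] with x hx
  rw [sub_zero, map_pow, map_pow] at hx
  rw [sub_zero]
  exact lt_of_pow_lt_pow_left₀ n zero_le hx

/-- Cauchy-type bound: a root of a monic polynomial is no larger than its coefficients, as soon
as the bound is at least `1`. -/
theorem valued_root_le {p : K[X]} (hp : p.Monic) {x : K} (hx : p.eval x = 0) {M : Γ₀}
    (hM : 1 ≤ M) (hcoeff : ∀ k < p.natDegree, Valued.v (p.coeff k) ≤ M) : Valued.v x ≤ M := by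
  by_contra! hlt
  have h1 : 1 < Valued.v x := hM.trans_lt hlt
  have h0 : (0 : Γ₀) < Valued.v x := zero_lt_one.trans h1
  have hsum : x ^ p.natDegree = -∑ k ∈ Finset.range p.natDegree, p.coeff k * x ^ k := by
    rw [Polynomial.eval_eq_sum_range, Finset.sum_range_succ, hp.coeff_natDegree, one_mul] at hx
    exact eq_neg_of_add_eq_zero_right hx
  have : Valued.v (∑ k ∈ Finset.range p.natDegree, p.coeff k * x ^ k)
      < (Valued.v x : Γ₀) ^ p.natDegree := by
    refine Valuation.map_sum_lt' _ (pow_pos h0 _) fun k hk => ?_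
    have hk := Finset.mem_range.mp hk
    calc Valued.v (p.coeff k * x ^ k) = Valued.v (p.coeff k) * (Valued.v x : Γ₀) ^ k := by
          rw [map_mul, map_pow]
      _ ≤ M * Valued.v x ^ k := mul_le_mul_left (hcoeff k hk) _
      _ < Valued.v x * Valued.v x ^ k := mul_lt_mul_of_pos_right hlt (pow_pos h0 _)
      _ = Valued.v x ^ (k + 1) := (pow_succ' _ _).symm
      _ ≤ Valued.v x ^ p.natDegree := pow_le_pow_right₀ h1.le hk
  rw [← Valuation.map_neg, ← hsum, map_pow] at this
  exact lt_irrefl _ this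

/-- A point at which a monic polynomial is small lies near one of its roots, because the value
there is the product of the distances to the roots. -/
theorem exists_root_near [IsAlgClosed K] {p : K[X]} (hp : p.Monic) {x c : K}
    (hx : Valued.v (p.eval x) < (Valued.v (c ^ p.natDegree) : Γ₀)) :
    ∃ r, p.eval r = 0 ∧ Valued.v (r - x) < (Valued.v c : Γ₀) := by
  by_contra! hcon
  refine hx.not_ge ?_
  have hs := IsAlgClosed.splits p
  rw [hs.eval_eq_prod_roots_of_monic hp, hs.natDegree_eq_card_roots]
  have key : ∀ s : Multiset K, (∀ r ∈ s, p.eval r = 0) →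
      (Valued.v (c ^ s.card) : Γ₀) ≤ Valued.v (s.map (x - ·)).prod := by
    intro s
    induction s using Multiset.induction_on with
    | empty => simp
    | cons r s ih =>
      intro h
      rw [Multiset.card_cons, Multiset.map_cons, Multiset.prod_cons, pow_succ', map_mul, map_mul]
      refine mul_le_mul' ?_ (ih fun r hr => h r (Multiset.mem_cons_of_mem hr))
      rw [Valuation.map_sub_swap]
      exact hcon r (h r (Multiset.mem_cons_self r s))
  exact key _ fun r hr => (Polynomial.mem_roots'.mp hr).2

variable {s : ℕ}

/-- Every root of a monic polynomial with parameters persists, up to a small perturbation, when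
the parameters move slightly. -/
theorem eventually_exists_root_near [IsAlgClosed K] {p : (MvPolynomial (Fin s) K)[X]}
    (hp : p.Monic) {y : Fin s → K} {x : K} (hx : (p.map (MvPolynomial.eval y)).eval x = 0)
    {V : Set K} (hV : V ∈ 𝓝 x) :
    ∀ᶠ y' in 𝓝 y, ∃ r ∈ V, (p.map (MvPolynomial.eval y')).eval r = 0 := by
  obtain ⟨c, hc, hcV⟩ := valued_mem_nhds_iff.mp hV
  have heq : ∀ y', (p.map (MvPolynomial.eval y')).eval x =
      MvPolynomial.eval y' (p.eval (MvPolynomial.C x)) := by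
    intro y'
    rw [← Polynomial.eval_map_apply, MvPolynomial.eval_C]
  have hlim : Tendsto (fun y' => (p.map (MvPolynomial.eval y')).eval x) (𝓝 y) (𝓝 0) := by
    rw [← hx]
    simp only [heq]
    exact (MvPolynomial.continuous_eval _).tendsto y
  filter_upwards [valued_tendsto_iff.mp hlim (c ^ p.natDegree) (pow_ne_zero _ hc)] with y' hy'
  rw [sub_zero] at hy'
  obtain ⟨r, hr, hrc⟩ := exists_root_near (hp.map (MvPolynomial.eval y')) (x := x) (c := c)
    (by rwa [hp.natDegree_map])
  exact ⟨r, hcV hrc, hr⟩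

variable {α : Type*} {l : Filter α} {Y : α → Fin s → K} {y : Fin s → K} {f : α → K}

/-- Roots of a monic polynomial stay bounded as its parameters converge. -/
theorem eventuallyVBounded_root {p : (MvPolynomial (Fin s) K)[X]} (hp : p.Monic)
    (hY : Tendsto Y l (𝓝 y)) (hf : ∀ a, (p.map (MvPolynomial.eval (Y a))).eval (f a) = 0) :
    EventuallyVBounded l f := by
  have hb : ∀ k, EventuallyVBounded l (fun a => MvPolynomial.eval (Y a) (p.coeff k)) := fun k =>
    .of_tendsto (((MvPolynomial.continuous_eval (p.coeff k)).tendsto y).comp hY)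
  choose c hc hb using hb
  obtain ⟨k₀, -, hmax⟩ := Finset.exists_max_image (Finset.range (p.natDegree + 1))
    (fun k => (Valued.v (c k) : Γ₀)) ⟨0, by simp⟩
  refine ⟨c k₀, hc k₀, ?_⟩
  filter_upwards [(Finset.eventually_all (Finset.range (p.natDegree + 1))).mpr
    fun k _ => hb k] with a ha
  have hle : ∀ k ≤ p.natDegree, Valued.v (MvPolynomial.eval (Y a) (p.coeff k))
      ≤ (Valued.v (c k₀) : Γ₀) := fun k hk =>
    have hk' := Finset.mem_range.mpr (Nat.lt_succ_of_le hk)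
    (ha k hk').trans (hmax k hk')
  refine valued_root_le (hp.map (MvPolynomial.eval (Y a))) (hf a) ?_ ?_
  · simpa [hp.coeff_natDegree] using hle _ le_rfl
  · intro k hk
    rw [hp.natDegree_map] at hk
    simpa using hle k hk.le

/-- As the parameters `Y` tend to `y`, a root of the polynomial at `Y` becomes an approximate root
of the polynomial at `y`: the difference of the two values has coefficients tending to `0` and
bounded argument. -/
theorem tendsto_eval_specialization {p : (MvPolynomial (Fin s) K)[X]} (hp : p.Monic)
    (hY : Tendsto Y l (𝓝 y)) (hf : ∀ a, (p.map (MvPolynomial.eval (Y a))).eval (f a) = 0) :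
    Tendsto (fun a => (p.map (MvPolynomial.eval y)).eval (f a)) l (𝓝 0) := by
  have hb := eventuallyVBounded_root hp hY hf
  have heq : ∀ a, (p.map (MvPolynomial.eval y)).eval (f a) =
      ∑ k ∈ Finset.range (p.natDegree + 1),
        (MvPolynomial.eval y (p.coeff k) - MvPolynomial.eval (Y a) (p.coeff k)) * f a ^ k := by
    intro a
    rw [← sub_zero ((p.map _).eval _), ← hf a]
    simp only [Polynomial.eval_map, Polynomial.eval₂_eq_sum_range, ← Finset.sum_sub_distrib,
      sub_mul]
  simp only [heq]
  rw [← Finset.sum_const_zero (s := Finset.range (p.natDegree + 1))]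
  refine tendsto_finsetSum _ fun k _ => ?_
  refine (EventuallyVBounded.tendsto_mul_zero ?_ (hb.pow k))
  rw [← sub_self (MvPolynomial.eval y (p.coeff k))]
  exact tendsto_const_nhds.sub (((MvPolynomial.continuous_eval (p.coeff k)).tendsto y).comp hY)

end Valued

/-! ### Points of an integral algebra over a polynomial ring -/

section Points

variable {K : Type*} [Field K] {s : ℕ} {R : Type*} [CommRing R] [Algebra K R]
  [Algebra (MvPolynomial (Fin s) K) R]

/-- The point of affine space below the `K`-point `φ`. -/
noncomputable def basePoint (s : ℕ) [Algebra (MvPolynomial (Fin s) K) R] (φ : R →ₐ[K] K) :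
    Fin s → K :=
  fun j => φ (algebraMap (MvPolynomial (Fin s) K) R (MvPolynomial.X j))

variable [IsScalarTower K (MvPolynomial (Fin s) K) R]

theorem apply_algebraMap_eq_eval_basePoint (φ : R →ₐ[K] K) (a : MvPolynomial (Fin s) K) :
    φ (algebraMap (MvPolynomial (Fin s) K) R a) = MvPolynomial.eval (basePoint s φ) a := by
  have : φ.comp (IsScalarTower.toAlgHom K (MvPolynomial (Fin s) K) R) =
      MvPolynomial.aeval (basePoint s φ) := by
    ext j
    simp [basePoint]
  exact (DFunLike.congr_fun this a).trans (by rw [MvPolynomial.aeval_eq_eval])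

theorem eval_minpoly_basePoint (φ : R →ₐ[K] K) (t : R) :
    ((minpoly (MvPolynomial (Fin s) K) t).map (MvPolynomial.eval (basePoint s φ))).eval (φ t)
      = 0 := by
  have hcomp : (MvPolynomial.eval (basePoint s φ)) =
      (φ : R →+* K).comp (algebraMap (MvPolynomial (Fin s) K) R) :=
    RingHom.ext fun a => (apply_algebraMap_eq_eval_basePoint φ a).symm
  have h := congrArg φ (minpoly.aeval (MvPolynomial (Fin s) K) t)
  rw [map_zero] at h
  rw [Polynomial.eval_map, hcomp, ← h, Polynomial.aeval_def]
  exact (Polynomial.hom_eval₂ _ _ (φ : R →+* K) t).symm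

variable [IsAlgClosed K] [IsDomain R] [Algebra.FiniteType K R]
  [FaithfulSMul (MvPolynomial (Fin s) K) R] [Algebra.IsIntegral (MvPolynomial (Fin s) K) R]

/-- Each root `τ` at `y` of the minimal polynomial of `t` is the value of `t` at some `K`-point
above `y`. Since the polynomial ring is integrally closed, the minimal polynomial generates the
kernel of `T ↦ t`, so `(y, τ)` is a point of the subalgebra generated by `t`; lying over and the
Nullstellensatz extend it to `R`. -/
theorem exists_point_over (y : Fin s → K) (t : R) (τ : K)
    (hτ : ((minpoly (MvPolynomial (Fin s) K) t).map (MvPolynomial.eval y)).eval τ = 0) :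
    ∃ φ : R →ₐ[K] K, φ t = τ ∧
      ∀ a, φ (algebraMap (MvPolynomial (Fin s) K) R a) = MvPolynomial.eval y a := by
  set A := MvPolynomial (Fin s) K
  have : Module.IsTorsionFree A R := inferInstance
  let ψ : A[X] →+* K := Polynomial.eval₂RingHom (MvPolynomial.eval y) τ
  have hψC : ∀ x : K, ψ (Polynomial.C (MvPolynomial.C x)) = x := fun x =>
    (Polynomial.eval₂_C _ _).trans (MvPolynomial.eval_C x)
  have hψ : Function.Surjective ψ := fun x => ⟨_, hψC x⟩
  have hmax : (RingHom.ker ψ).IsMaximal := RingHom.ker_isMaximal_of_surjective ψ hψ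
  let _ : Algebra A[X] R := (Polynomial.aeval t : A[X] →ₐ[A] R).toRingHom.toAlgebra
  have halg : ∀ q : A[X], algebraMap A[X] R q = Polynomial.aeval t q := fun _ => rfl
  have : IsScalarTower A A[X] R := IsScalarTower.of_algebraMap_eq fun a => by
    rw [halg]; simp
  have : Algebra.IsIntegral A[X] R := Algebra.IsIntegral.tower_top A
  obtain ⟨Q, hQ, hQψ⟩ := Ideal.exists_ideal_over_maximal_of_isIntegral (S := R) (RingHom.ker ψ) (by
    intro q hq
    rw [RingHom.mem_ker, halg] at hq
    obtain ⟨q', rfl⟩ := minpoly.isIntegrallyClosed_dvd (Algebra.IsIntegral.isIntegral t) hq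
    rw [RingHom.mem_ker, map_mul]
    have : ψ (minpoly A t) = 0 := by rw [← hτ, Polynomial.eval_map]; rfl
    rw [this, zero_mul])
  let _ : Field (R ⧸ Q) := Ideal.Quotient.field Q
  have : Module.Finite K (R ⧸ Q) := finite_of_finite_type_of_isJacobsonRing K (R ⧸ Q)
  let e := AlgEquiv.ofBijective (Algebra.ofId K (R ⧸ Q))
    IsAlgClosed.algebraMap_bijective_of_isIntegral
  let φ : R →ₐ[K] K := e.symm.toAlgHom.comp (Ideal.Quotient.mkₐ K Q)
  have hφ : ∀ q : A[X], φ (Polynomial.aeval t q) = ψ q := by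
    intro q
    have hmem : Polynomial.aeval t (q - Polynomial.C (MvPolynomial.C (ψ q))) ∈ Q := by
      rw [← halg, ← Ideal.mem_comap, hQψ, RingHom.mem_ker, map_sub, hψC, sub_self]
    have h0 : φ (Polynomial.aeval t (q - Polynomial.C (MvPolynomial.C (ψ q)))) = 0 := by
      change e.symm (Ideal.Quotient.mk Q _) = 0
      rw [Ideal.Quotient.eq_zero_iff_mem.mpr hmem, map_zero]
    rw [map_sub, map_sub, sub_eq_zero] at h0
    rw [h0, Polynomial.aeval_C, ← MvPolynomial.algebraMap_eq,
      ← IsScalarTower.algebraMap_apply K A R, φ.commutes]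
    rfl
  refine ⟨φ, ?_, fun a => ?_⟩
  · simpa [ψ] using hφ Polynomial.X
  · simpa [ψ] using hφ (Polynomial.C a)

/-- The finite map from the points of `R` to affine space is open for the valuation topology, where
points are compared through the values of finitely many functions `x i`. -/
theorem eventually_exists_point_near {Γ₀ : Type*} [LinearOrderedCommGroupWithZero Γ₀]
    [Valued K Γ₀] {m : ℕ} (x : Fin m → R) (φ₀ : R →ₐ[K] K) {V : Set (Fin m → K)}
    (hV : V ∈ 𝓝 fun i => φ₀ (x i)) :
    ∀ᶠ y in 𝓝 (basePoint s φ₀), ∃ φ : R →ₐ[K] K, basePoint s φ = y ∧ (fun i => φ (x i)) ∈ V := by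
  set y₀ := basePoint s φ₀ with hy₀
  have hint : ∀ r : R, IsIntegral (MvPolynomial (Fin s) K) r := Algebra.IsIntegral.isIntegral
  let P : Fin m → K[X] := fun i =>
    (minpoly (MvPolynomial (Fin s) K) (x i)).map (MvPolynomial.eval y₀)
  have hP0 : ∀ i, P i ≠ 0 := fun i => ((minpoly.monic (hint (x i))).map _).ne_zero
  -- Strip from `P i` its root at the given point, so that `q i` vanishes only at the other roots;
  -- the product `t` of the `q i` then singles out `φ₀` among the nearby points.
  choose q hPq hq using fun i =>
    (P i).exists_eq_pow_rootMultiplicity_mul_and_not_dvd (hP0 i) (φ₀ (x i))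
  let t : R := ∏ i, Polynomial.aeval (x i) (q i)
  have ht : ∀ φ : R →ₐ[K] K, φ t = ∏ i, (q i).eval (φ (x i)) := fun φ => by
    simp only [t, map_prod, ← Polynomial.aeval_algHom_apply, Polynomial.coe_aeval_eq_eval]
  have ht0 : φ₀ t ≠ 0 := by
    rw [ht, Finset.prod_ne_zero_iff]
    intro i _ h
    exact hq i (Polynomial.dvd_iff_isRoot.mpr h)
  -- `l` describes points whose base point tends to `y₀` and whose value of `t` tends to `φ₀ t`.
  let l : Filter (R →ₐ[K] K) := comap (basePoint s) (𝓝 y₀) ⊓ comap (fun φ => φ t) (𝓝 (φ₀ t))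
  have hly : Tendsto (basePoint s) l (𝓝 y₀) := tendsto_comap.mono_left inf_le_left
  have hlt : Tendsto (fun φ : R →ₐ[K] K => φ t) l (𝓝 (φ₀ t)) :=
    tendsto_comap.mono_left inf_le_right
  have hlx : Tendsto (fun (φ : R →ₐ[K] K) i => φ (x i)) l (𝓝 fun i => φ₀ (x i)) := by
    rw [tendsto_pi_nhds]
    intro i
    have hbd : ∀ j, EventuallyVBounded l fun φ : R →ₐ[K] K => φ (x j) := fun j =>
      eventuallyVBounded_root (minpoly.monic (hint (x j))) hly fun φ =>
        eval_minpoly_basePoint φ (x j)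
    have hPi : Tendsto (fun φ : R →ₐ[K] K => (P i).eval (φ (x i))) l (𝓝 0) :=
      tendsto_eval_specialization (minpoly.monic (hint (x i))) hly fun φ =>
        eval_minpoly_basePoint φ (x i)
    -- This product equals `P i` at `φ (x i)`, which tends to `0`, times the bounded factors
    -- `q j` at `φ (x j)` with `j ≠ i`.
    have h1 : Tendsto (fun φ : R →ₐ[K] K =>
        (φ (x i) - φ₀ (x i)) ^ (P i).rootMultiplicity (φ₀ (x i)) * φ t) l (𝓝 0) := by
      refine (EventuallyVBounded.tendsto_mul_zero hPi
        (EventuallyVBounded.prod (Finset.univ.erase i) fun j _ => (hbd j).polynomial_eval (q j))).congr fun φ => ?_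
      rw [ht, ← Finset.mul_prod_erase _ _ (Finset.mem_univ i), ← mul_assoc]
      congr 1
      conv_lhs => rw [hPq i]
      simp
    have h2 := h1.div hlt ht0
    rw [zero_div] at h2
    have h3 := tendsto_zero_of_pow (h2.congr' (by
      filter_upwards [hlt.eventually_ne ht0] with φ hφ
      exact mul_div_cancel_right₀ _ hφ))
    simpa using h3.add_const (φ₀ (x i))
  obtain ⟨S, hS, T, hT, hST⟩ := mem_inf_iff_superset.mp (hlx hV)
  obtain ⟨S', hS', hSS'⟩ := mem_comap.mp hS
  obtain ⟨T', hT', hTT'⟩ := mem_comap.mp hT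
  filter_upwards [hS', eventually_exists_root_near (minpoly.monic (hint t))
    (eval_minpoly_basePoint φ₀ t) hT'] with y hy ⟨τ, hτT, hτ⟩
  obtain ⟨φ, hφt, hφy⟩ := exists_point_over y t τ hτ
  have hb : basePoint s φ = y := by
    ext j
    simpa [basePoint] using hφy (MvPolynomial.X j)
  refine ⟨φ, hb, hST ⟨hSS' ?_, hTT' ?_⟩⟩
  · simpa [hb] using hy
  · simpa [hφt] using hτT

end Points

/-- Let `K` be an algebraically closed field equipped with a nontrivial valuation (inducing the
valuation topology), let `I` be a prime ideal of `K[X₁,…,X_m]` and let `Z ⊆ K^m` be its zero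
set.  Then every nonempty relatively open subset `U` of `Z` meets the nonvanishing locus of any
polynomial `h ∉ I`:  Zariski-dense open conditions are dense in valuation-open subsets of `Z`. -/
theorem exists_mem_valuationOpen_not_vanishing
    {K : Type*} [Field K] [IsAlgClosed K]
    {Γ₀ : Type*} [LinearOrderedCommGroupWithZero Γ₀] [Valued K Γ₀]
    (hnt : ∃ a : K, Valued.v a ≠ (0 : Γ₀) ∧ Valued.v a ≠ (1 : Γ₀))
    (m : ℕ) (I : Ideal (MvPolynomial (Fin m) K)) (hI : I.IsPrime)
    (Z : Set (Fin m → K)) (hZ : Z = {x | ∀ p ∈ I, MvPolynomial.eval x p = 0})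
    (U : Set (Fin m → K)) (hU : ∃ V : Set (Fin m → K), IsOpen V ∧ U = V ∩ Z)
    (hUne : U.Nonempty)
    (h : MvPolynomial (Fin m) K) (hh : h ∉ I) :
    ∃ x ∈ U, MvPolynomial.eval x h ≠ 0 := by
  obtain ⟨V, hVo, rfl⟩ := hU
  obtain ⟨z, hzV, hzZ⟩ := hUne
  subst hZ
  let R := MvPolynomial (Fin m) K ⧸ I
  obtain ⟨s, g, hginj, hgint⟩ := exists_integral_inj_algHom_of_fg K R
  let _ : Algebra (MvPolynomial (Fin s) K) R := g.toRingHom.toAlgebra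
  have : IsScalarTower K (MvPolynomial (Fin s) K) R :=
    IsScalarTower.of_algebraMap_eq fun a => (g.commutes a).symm
  have : FaithfulSMul (MvPolynomial (Fin s) K) R :=
    (faithfulSMul_iff_algebraMap_injective _ _).mpr hginj
  have : Algebra.IsIntegral (MvPolynomial (Fin s) K) R := ⟨hgint⟩
  let x : Fin m → R := fun i => Ideal.Quotient.mkₐ K I (MvPolynomial.X i)
  have hx : ∀ (φ : R →ₐ[K] K) (p : MvPolynomial (Fin m) K),
      φ (Ideal.Quotient.mkₐ K I p) = MvPolynomial.eval (fun i => φ (x i)) p := by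
    intro φ p
    have : φ.comp (Ideal.Quotient.mkₐ K I) = MvPolynomial.aeval fun i => φ (x i) := by
      ext j
      simp only [AlgHom.comp_apply, MvPolynomial.aeval_X, x]
    exact (DFunLike.congr_fun this p).trans (by rw [MvPolynomial.aeval_eq_eval])
  let φ₀ : R →ₐ[K] K := Ideal.Quotient.liftₐ I (MvPolynomial.aeval z) fun p hp => by
    simpa [MvPolynomial.aeval_eq_eval] using hzZ p hp
  have hφ₀ : (fun i => φ₀ (x i)) = z := by
    ext i
    exact (Ideal.Quotient.lift_mk I _ _).trans (MvPolynomial.aeval_X z i)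
  have hne : Ideal.Quotient.mkₐ K I h ≠ 0 := fun h0 => hh (Ideal.Quotient.eq_zero_iff_mem.mp h0)
  -- A nonzero `a` on affine space divisible by `h` in `R`: where `a` does not vanish on the base,
  -- neither does `h` above it.
  obtain ⟨a, ha0, b, hab⟩ := (Algebra.IsIntegral.isIntegral (R := MvPolynomial (Fin s) K)
    (Ideal.Quotient.mkₐ K I h)).isAlgebraic.exists_nonzero_dvd (mem_nonZeroDivisors_of_ne_zero hne)
  have hev := eventually_exists_point_near (s := s) x φ₀ (V := V)
    (by rw [hφ₀]; exact hVo.mem_nhds hzV)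
  obtain ⟨W, hW, hWsub⟩ : ∃ W : Fin s → Set K, (∀ j, W j ∈ 𝓝 (basePoint s φ₀ j)) ∧
      ∀ y ∈ Set.pi Set.univ W, ∃ φ : R →ₐ[K] K, basePoint s φ = y ∧ (fun i => φ (x i)) ∈ V := by
    rw [Filter.Eventually, nhds_pi, Filter.mem_pi'] at hev
    obtain ⟨J, W, hW, hWsub⟩ := hev
    exact ⟨W, hW, fun y hy => hWsub fun j _ => hy j trivial⟩
  obtain ⟨y, hyW, hya⟩ : ∃ y ∈ Set.pi Set.univ W, MvPolynomial.eval y a ≠ 0 := by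
    by_contra! hcon
    exact ha0 (MvPolynomial.funext_set W (fun j => valued_infinite_of_mem_nhds hnt (hW j))
      fun y hy => by rw [hcon y hy, map_zero])
  obtain ⟨φ, rfl, hφV⟩ := hWsub y hyW
  refine ⟨_, ⟨hφV, fun p hp => ?_⟩, fun h0 => hya ?_⟩
  · rw [← hx]
    exact (congrArg φ (Ideal.Quotient.eq_zero_iff_mem.mpr hp)).trans (map_zero φ)
  · rw [← apply_algebraMap_eq_eval_basePoint, hab, map_mul, hx, h0, zero_mul]
end

section
/- Let (K, v_K) be a field with a multiplicative valuation v_K : K → ℝ≥0, and let L be an algebraically closed field extension of K equipped with a valuation v : L → ℝ≥0 extending v_K and such that v(L^×) = ℝ>0. Let R = K[Y₁,…,Y_m]/I with I a prime ideal, let f₁,…,fₙ be units of R, and let d be the transcendence degree over K of the subfield of Frac(R) generated by f₁,…,fₙ. Let (g_{ℓ,j}) be a finite doubly-indexed family of elements of R and (γ_{ℓ,j}) positive reals, and set X = {φ ∈ Hom_{K-alg}(R, L) : for some ℓ, v(φ(g_{ℓ,j})) ≤ γ_{ℓ,j} for all j}. Then the subset T = {(log v(φ(f₁)), …, log v(φ(fₙ)))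 : φ ∈ X} of ℝⁿ is a finite union of ℚ-rational polyhedra, each of which has affine span of dimension at most d; in particular T is a closed subset of ℝⁿ. -/
/-!
The tropicalization of `X` is shown to be semilinear, i.e. obtained from closed half-spaces with
rational normal vectors by finite unions and intersections; a disjunctive normal form then gives
the polyhedra. Semilinear sets are stable under coordinate projections (Fourier–Motzkin
elimination, `Trop.SemiLin.exists_pi`), and this drives the whole argument.

*Inequalities become units.* One has `v (g) ≤ γ` iff some `s` satisfies `v s = v (g + s) = γ`.
Adjoining such variables `s` and inverting them together with the `g + s` reduces the claim to the
tropicalization of units of a finitely generated domain `R` over `K`, without further conditions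
(`Trop.semiLin_of_le`).

*Units reduce to polynomials in `e` variables.* By Noether normalization `R` is integral over
`A = K[t₁, …, t_e]`. For a unit `f` of `R` the possible values `v (φ f)`, for `φ` lying over a
given point of affine space, are the values of the roots of the specialized minimal polynomial of
`f` over the integrally closed ring `A`, and these are read off from the values of its coefficients
(Newton polygon, `Trop.exists_root_iff`). To treat several units at once, the same is done for
sufficiently many monomials in them, enough to separate the finitely many points of the fibre
(`Trop.exists_separating`). Vanishing of coefficients is avoided by perturbing the point
(`Trop.exists_perturb`). See `Trop.TropPoly.semiLin_units`.

*Polynomials in `e` variables*, by induction on `e`. After a finitely generated algebraic extension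
of `K[t₁, …, t_e]` and inversion of one element, polynomials in `t_{e+1}` split into linear
factors with distinct roots differing by units (`Trop.exists_splitting_ring`). The possible
distances of a point of `L` to finitely many given points depend semilinearly on the mutual
distances of the latter (`Trop.exists_dist_iff`), and these are absolute values of units, covered
by the case of `e` variables and the previous paragraph. See `Trop.TropPoly.succ`.

*Dimension.* A polyhedron `P` in the tropicalization whose direction has dimension more than `d`
has `d + 1` linearly independent coordinate functions. The corresponding `fᵢ` satisfy a polynomial
relation, and at every point of `P` two different terms of it have the same absolute value. So `P`
is covered by finitely many hyperplanes, one of which contains it because `P` is convex, and this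
contradicts the independence (`Trop.finrank_direction_le`).
-/

/-! ### Semilinear sets -/

namespace Trop

/-- Subsets of `ℝ^ι` obtained from closed half-spaces with rational normal vector (and arbitrary
real offset) by finite unions and intersections. These are exactly the finite unions of
`ℚ`-rational polyhedra, see `SemiLin.exists_dnf`. -/
inductive SemiLin {ι : Type*} [Fintype ι] : Set (ι → ℝ) → Prop
  | half (a : ι → ℚ) (b : ℝ) : SemiLin {y | ∑ i, (a i : ℝ) * y i ≤ b}
  | empty : SemiLin ∅
  | univ : SemiLin Set.univ
  | inter {S T : Set (ι → ℝ)} : SemiLin S → SemiLin T → SemiLin (S ∩ T)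
  | union {S T : Set (ι → ℝ)} : SemiLin S → SemiLin T → SemiLin (S ∪ T)

/-- Affine functions on `ℝ^ι` whose linear part is rational. -/
def RatAff {ι : Type*} [Fintype ι] (g : (ι → ℝ) → ℝ) : Prop :=
  ∃ (a : ι → ℚ) (b : ℝ), ∀ y, g y = ∑ i, (a i : ℝ) * y i + b

section
variable {ι κ : Type*} [Fintype ι] [Fintype κ]

lemma RatAff.const (c : ℝ) : RatAff (fun _ : ι → ℝ => c) := ⟨0, c, fun y => by simp⟩

lemma RatAff.coord (i : ι) : RatAff (fun y : ι → ℝ => y i) := by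
  classical
  refine ⟨Pi.single i 1, 0, fun y => ?_⟩
  rw [Finset.sum_eq_single i]
  · simp
  · intro j _ hj; simp [Pi.single_eq_of_ne hj]
  · simp

lemma RatAff.add {g h : (ι → ℝ) → ℝ} (hg : RatAff g) (hh : RatAff h) :
    RatAff (fun y => g y + h y) := by
  obtain ⟨a, b, h1⟩ := hg
  obtain ⟨a', b', h2⟩ := hh
  refine ⟨a + a', b + b', fun y => ?_⟩
  simp only [h1, h2]
  simp only [Pi.add_apply, Rat.cast_add, add_mul, Finset.sum_add_distrib]
  ring

lemma RatAff.mul_rat {g : (ι → ℝ) → ℝ} (hg : RatAff g) (q : ℚ) :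
    RatAff (fun y => (q : ℝ) * g y) := by
  obtain ⟨a, b, h1⟩ := hg
  refine ⟨fun i => q * a i, q * b, fun y => ?_⟩
  simp only [h1]
  rw [mul_add, Finset.mul_sum]
  simp only [Rat.cast_mul, mul_assoc]

lemma RatAff.mul_nat {g : (ι → ℝ) → ℝ} (hg : RatAff g) (q : ℕ) :
    RatAff (fun y => (q : ℝ) * g y) := by
  simpa using hg.mul_rat q

lemma RatAff.sub {g h : (ι → ℝ) → ℝ} (hg : RatAff g) (hh : RatAff h) :
    RatAff (fun y => g y - h y) := by
  simpa [sub_eq_add_neg] using hg.add (hh.mul_rat (-1))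

lemma RatAff.sum {α : Type*} (s : Finset α) {g : α → (ι → ℝ) → ℝ} (hg : ∀ x, RatAff (g x)) :
    RatAff (fun y => ∑ x ∈ s, g x y) := by
  classical
  induction s using Finset.induction_on with
  | empty => simpa using RatAff.const 0
  | insert x s hx ih => simpa [Finset.sum_insert hx] using (hg x).add ih

lemma RatAff.comp {g : (κ → ℝ) → ℝ} (hg : RatAff g) {F : (ι → ℝ) → κ → ℝ}
    (hF : ∀ k, RatAff (fun y => F y k)) : RatAff (fun y => g (F y)) := by
  obtain ⟨a, b, h1⟩ := hg
  simp only [h1]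
  exact (RatAff.sum _ fun k => (hF k).mul_rat (a k)).add (RatAff.const b)

lemma SemiLin.of_eq {S T : Set (ι → ℝ)} (hS : SemiLin S) (h : ∀ y, y ∈ T ↔ y ∈ S) :
    SemiLin T := by
  rwa [show T = S from Set.ext h]

lemma SemiLin.le {g h : (ι → ℝ) → ℝ} (hg : RatAff g) (hh : RatAff h) :
    SemiLin {y | g y ≤ h y} := by
  obtain ⟨a, b, h1⟩ := hg.sub hh
  refine (SemiLin.half a (-b)).of_eq fun y => ?_
  have := h1 y
  simp only [Set.mem_ofPred_eq]
  constructor <;> intro h <;> linarith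

lemma SemiLin.eq {g h : (ι → ℝ) → ℝ} (hg : RatAff g) (hh : RatAff h) :
    SemiLin {y | g y = h y} :=
  ((SemiLin.le hg hh).inter (SemiLin.le hh hg)).of_eq fun _ => le_antisymm_iff

lemma SemiLin.and {P Q : (ι → ℝ) → Prop} (hP : SemiLin {y | P y}) (hQ : SemiLin {y | Q y}) :
    SemiLin {y | P y ∧ Q y} := hP.inter hQ

lemma SemiLin.or {P Q : (ι → ℝ) → Prop} (hP : SemiLin {y | P y}) (hQ : SemiLin {y | Q y}) :
    SemiLin {y | P y ∨ Q y} := hP.union hQ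

lemma SemiLin.forall_mem {α : Type*} (s : Finset α) {P : α → (ι → ℝ) → Prop}
    (h : ∀ x ∈ s, SemiLin {y | P x y}) : SemiLin {y | ∀ x ∈ s, P x y} := by
  classical
  induction s using Finset.induction_on with
  | empty => exact SemiLin.univ.of_eq (by simp)
  | insert x s hx ih =>
    exact ((h x (by simp)).inter (ih fun z hz => h z (by simp [hz]))).of_eq (by simp)

lemma SemiLin.exists_mem {α : Type*} (s : Finset α) {P : α → (ι → ℝ) → Prop}
    (h : ∀ x ∈ s, SemiLin {y | P x y}) : SemiLin {y | ∃ x ∈ s, P x y} := by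
  classical
  induction s using Finset.induction_on with
  | empty => exact SemiLin.empty.of_eq (by simp)
  | insert x s hx ih =>
    exact ((h x (by simp)).union (ih fun z hz => h z (by simp [hz]))).of_eq (by simp)

lemma SemiLin.forall_fin {α : Type*} [Finite α] {P : α → (ι → ℝ) → Prop}
    (h : ∀ x, SemiLin {y | P x y}) : SemiLin {y | ∀ x, P x y} := by
  have := Fintype.ofFinite α
  exact (SemiLin.forall_mem Finset.univ fun x _ => h x).of_eq (by simp)

lemma SemiLin.exists_fin {α : Type*} [Finite α] {P : α → (ι → ℝ) → Prop}
    (h : ∀ x, SemiLin {y | P x y}) : SemiLin {y | ∃ x, P x y} := by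
  have := Fintype.ofFinite α
  exact (SemiLin.exists_mem Finset.univ fun x _ => h x).of_eq (by simp)

lemma SemiLin.of_prop (p : Prop) : SemiLin {_y : ι → ℝ | p} := by
  by_cases hp : p
  · exact SemiLin.univ.of_eq (by simp [hp])
  · exact SemiLin.empty.of_eq (by simp [hp])

lemma SemiLin.imp_prop {p : Prop} {P : (ι → ℝ) → Prop} (h : p → SemiLin {y | P y}) :
    SemiLin {y | p → P y} := by
  by_cases hp : p
  · exact (h hp).of_eq (by simp [hp])
  · exact SemiLin.univ.of_eq (by simp [hp])

lemma SemiLin.preimage {S : Set (κ → ℝ)} (hS : SemiLin S) {F : (ι → ℝ) → κ → ℝ}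
    (hF : ∀ k, RatAff (fun y => F y k)) : SemiLin {y | F y ∈ S} := by
  induction hS with
  | half a b =>
    exact SemiLin.le (RatAff.sum _ fun k => (hF k).mul_rat (a k)) (RatAff.const b)
  | empty => exact SemiLin.empty
  | univ => exact SemiLin.univ
  | inter _ _ h1 h2 => exact h1.inter h2
  | union _ _ h1 h2 => exact h1.union h2

/-- The polyhedron cut out by a finite set of inequalities `⟨c.1, y⟩ ≤ c.2`. -/
def polyh (s : Finset ((ι → ℚ) × ℝ)) : Set (ι → ℝ) :=
  {y | ∀ c ∈ s, ∑ i, (c.1 i : ℝ) * y i ≤ c.2}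

/-- Disjunctive normal form: a semilinear set is a finite union of rational polyhedra. -/
lemma SemiLin.exists_dnf {S : Set (ι → ℝ)} (hS : SemiLin S) :
    ∃ F : Finset (Finset ((ι → ℚ) × ℝ)), ∀ y, y ∈ S ↔ ∃ s ∈ F, y ∈ polyh s := by
  classical
  induction hS with
  | half a b => exact ⟨{{(a, b)}}, fun y => by simp [polyh]⟩
  | empty => exact ⟨∅, by simp⟩
  | univ => exact ⟨{∅}, by simp [polyh]⟩
  | inter _ _ h1 h2 =>
    obtain ⟨F, hF⟩ := h1
    obtain ⟨G, hG⟩ := h2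
    refine ⟨Finset.image₂ (· ∪ ·) F G, fun y => ?_⟩
    rw [Set.mem_inter_iff, hF, hG]
    constructor
    · rintro ⟨⟨s, hs, hys⟩, t, ht, hyt⟩
      refine ⟨s ∪ t, Finset.mem_image₂_of_mem hs ht, fun c hc => ?_⟩
      exact (Finset.mem_union.1 hc).elim (hys c) (hyt c)
    · rintro ⟨u, hu, hyu⟩
      obtain ⟨s, hs, t, ht, rfl⟩ := Finset.mem_image₂.1 hu
      exact ⟨⟨s, hs, fun c hc => hyu c (Finset.mem_union_left _ hc)⟩,
        t, ht, fun c hc => hyu c (Finset.mem_union_right _ hc)⟩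
  | union _ _ h1 h2 =>
    obtain ⟨F, hF⟩ := h1
    obtain ⟨G, hG⟩ := h2
    refine ⟨F ∪ G, fun y => ?_⟩
    rw [Set.mem_union, hF, hG]
    constructor
    · rintro (⟨s, hs, h⟩ | ⟨s, hs, h⟩)
      · exact ⟨s, by simp [hs], h⟩
      · exact ⟨s, by simp [hs], h⟩
    · rintro ⟨s, hs, h⟩
      rcases Finset.mem_union.1 hs with hs | hs
      · exact Or.inl ⟨s, hs, h⟩
      · exact Or.inr ⟨s, hs, h⟩

lemma exists_between_finset {α : Type*} (s t : Finset α) (l u : α → ℝ)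
    (h : ∀ x ∈ s, ∀ y ∈ t, l x ≤ u y) :
    ∃ z, (∀ x ∈ s, l x ≤ z) ∧ ∀ y ∈ t, z ≤ u y := by
  rcases s.eq_empty_or_nonempty with rfl | hs
  · rcases t.eq_empty_or_nonempty with rfl | ht
    · exact ⟨0, by simp, by simp⟩
    · exact ⟨t.inf' ht u, by simp, fun y hy => Finset.inf'_le _ hy⟩
  · exact ⟨s.sup' hs l, fun x hx => Finset.le_sup' l hx,
      fun y hy => Finset.sup'_le _ _ fun x hx => h x hx y hy⟩

/-- One step of Fourier–Motzkin elimination. -/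
lemma SemiLin.exists_option {S : Set (Option ι → ℝ)} (hS : SemiLin S) :
    SemiLin {y : ι → ℝ | ∃ z : ℝ, (fun o : Option ι => o.elim z y) ∈ S} := by
  classical
  obtain ⟨F, hF⟩ := hS.exists_dnf
  have key : ∀ s ∈ F, SemiLin {y : ι → ℝ | ∃ z : ℝ,
      (fun o : Option ι => o.elim z y) ∈ polyh s} := by
    intro s _
    -- a constraint reads `α z + ℓ ≤ b`, with `α = c.1 none` and `ℓ = ℓ c y`
    let ℓ : ((Option ι → ℚ) × ℝ) → (ι → ℝ) → ℝ := fun c y => ∑ i, (c.1 (some i) : ℝ) * y i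
    have hℓ : ∀ c, RatAff (ℓ c) := fun c =>
      RatAff.sum _ fun i => (RatAff.coord i).mul_rat _
    have h0 : SemiLin {y : ι → ℝ | ∀ c ∈ s, c.1 none = 0 → ℓ c y ≤ c.2} :=
      SemiLin.forall_mem s fun c _ => SemiLin.imp_prop fun _ => SemiLin.le (hℓ c) (RatAff.const _)
    have h1 : SemiLin {y : ι → ℝ | ∀ c ∈ s, ∀ c' ∈ s, (c.1 none < 0 ∧ 0 < c'.1 none) →
        ((c.1 none)⁻¹ : ℚ) * (c.2 - ℓ c y) ≤ ((c'.1 none)⁻¹ : ℚ) * (c'.2 - ℓ c' y)} :=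
      SemiLin.forall_mem s fun c _ => SemiLin.forall_mem s fun c' _ => SemiLin.imp_prop fun _ =>
        SemiLin.le (((RatAff.const _).sub (hℓ c)).mul_rat _)
          (((RatAff.const _).sub (hℓ c')).mul_rat _)
    refine (h0.and h1).of_eq fun y => ?_
    simp only [Set.mem_ofPred_eq, polyh, Fintype.sum_option, Option.elim_none, Option.elim_some]
    have hpos : ∀ (c : (Option ι → ℚ) × ℝ) (z : ℝ), 0 < c.1 none →
        ((c.1 none : ℝ) * z + ℓ c y ≤ c.2 ↔ z ≤ ((c.1 none)⁻¹ : ℚ) * (c.2 - ℓ c y)) := by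
      intro c z hc
      have hc' : (0 : ℝ) < c.1 none := by exact_mod_cast hc
      rw [Rat.cast_inv, inv_mul_eq_div, le_div_iff₀ hc']
      constructor <;> intro h <;> linarith
    have hneg : ∀ (c : (Option ι → ℚ) × ℝ) (z : ℝ), c.1 none < 0 →
        ((c.1 none : ℝ) * z + ℓ c y ≤ c.2 ↔ ((c.1 none)⁻¹ : ℚ) * (c.2 - ℓ c y) ≤ z) := by
      intro c z hc
      have hc' : (c.1 none : ℝ) < 0 := by exact_mod_cast hc
      rw [Rat.cast_inv, inv_mul_eq_div, div_le_iff_of_neg hc']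
      constructor <;> intro h <;> linarith
    constructor
    · rintro ⟨z, hz⟩
      refine ⟨fun c hc h => ?_, fun c hc c' hc' h => ?_⟩
      · have := hz c hc
        simpa [h] using this
      · exact ((hneg c z h.1).1 (hz c hc)).trans ((hpos c' z h.2).1 (hz c' hc'))
    · rintro ⟨hz0, hz1⟩
      obtain ⟨z, hl, hu⟩ := exists_between_finset (s.filter fun c => c.1 none < 0)
        (s.filter fun c => 0 < c.1 none) (fun c => ((c.1 none)⁻¹ : ℚ) * (c.2 - ℓ c y))
        (fun c => ((c.1 none)⁻¹ : ℚ) * (c.2 - ℓ c y)) (by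
          intro c hc c' hc'
          rw [Finset.mem_filter] at hc hc'
          exact hz1 c hc.1 c' hc'.1 ⟨hc.2, hc'.2⟩)
      refine ⟨z, fun c hc => ?_⟩
      rcases lt_trichotomy (c.1 none) 0 with h | h | h
      · exact (hneg c z h).2 (hl c (by simp [hc, h]))
      · simpa [h] using hz0 c hc h
      · exact (hpos c z h).2 (hu c (by simp [hc, h]))
  refine (SemiLin.exists_mem F key).of_eq fun y => ?_
  simp only [Set.mem_ofPred_eq, hF]
  constructor
  · rintro ⟨z, s, hs, h⟩; exact ⟨s, hs, z, h⟩
  · rintro ⟨s, hs, z, h⟩; exact ⟨z, s, hs, h⟩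

lemma SemiLin.exists_pi_fin (n : ℕ) {P : (ι → ℝ) → (Fin n → ℝ) → Prop}
    (h : SemiLin {x : ι ⊕ Fin n → ℝ | P (fun i => x (.inl i)) (fun k => x (.inr k))}) :
    SemiLin {y | ∃ z, P y z} := by
  induction n with
  | zero =>
    refine (h.preimage (F := fun y s => Sum.elim y Fin.elim0 s) ?_).of_eq fun y => ?_
    · rintro (i | i)
      · exact RatAff.coord i
      · exact i.elim0
    · simp only [Set.mem_ofPred_eq, Sum.elim_inl, Sum.elim_inr]
      constructor
      · rintro ⟨z, hz⟩
        convert hz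
      · exact fun h => ⟨_, h⟩
  | succ n ih =>
    have h1 : SemiLin {x : Option (ι ⊕ Fin n) → ℝ | P (fun i => x (some (.inl i)))
        (fun k => (Fin.cons (x none) (fun j => x (some (.inr j))) : Fin (n + 1) → ℝ) k)} := by
      refine (h.preimage (F := fun x s => Sum.elim (fun i => x (some (.inl i)))
        (Fin.cons (x none) (fun j => x (some (.inr j)))) s) ?_).of_eq fun y => ?_
      · rintro (i | i)
        · exact RatAff.coord _
        · refine Fin.cases ?_ (fun j => ?_) i
          · exact RatAff.coord _
          · exact RatAff.coord _
      · simp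
    have h2 := ih (P := fun y z' => ∃ z0 : ℝ, P y (Fin.cons z0 z')) (by
      refine h1.exists_option.of_eq fun y => ?_
      simp)
    refine h2.of_eq fun y => ?_
    simp only [Set.mem_ofPred_eq]
    constructor
    · rintro ⟨z, hz⟩
      exact ⟨Fin.tail z, z 0, by simpa using hz⟩
    · rintro ⟨z', z0, hz⟩
      exact ⟨_, hz⟩

/-- Projections of semilinear sets are semilinear. -/
lemma SemiLin.exists_pi {P : (ι → ℝ) → (κ → ℝ) → Prop}
    (h : SemiLin {x : ι ⊕ κ → ℝ | P (fun i => x (.inl i)) (fun k => x (.inr k))}) :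
    SemiLin {y | ∃ z, P y z} := by
  let e := Fintype.equivFin κ
  have h1 := SemiLin.exists_pi_fin (Fintype.card κ) (P := fun (y : ι → ℝ) z => P y (z ∘ e)) (by
    refine (h.preimage (F := fun x s => Sum.elim (fun i => x (.inl i))
        (fun k => x (.inr (e k))) s) ?_).of_eq fun y => ?_
    · rintro (i | i)
      · exact RatAff.coord _
      · exact RatAff.coord _
    · rfl)
  refine h1.of_eq fun y => ?_
  constructor
  · rintro ⟨z, hz⟩
    exact ⟨z ∘ e.symm, by simpa [Function.comp_assoc] using hz⟩
  · rintro ⟨z, hz⟩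
    exact ⟨_, hz⟩

lemma isClosed_polyh (s : Finset ((ι → ℚ) × ℝ)) : IsClosed (polyh s) := by
  simp only [polyh, Set.ofPred_forall]
  refine isClosed_biInter fun c _ => ?_
  exact isClosed_le (by fun_prop) continuous_const

lemma convex_polyh (s : Finset ((ι → ℚ) × ℝ)) : Convex ℝ (polyh s) := by
  simp only [polyh, Set.ofPred_forall]
  refine convex_iInter₂ fun c _ => ?_
  exact convex_halfSpace_le ⟨fun x y => by simp [mul_add, Finset.sum_add_distrib],
    fun r x => by simp only [Pi.smul_apply, smul_eq_mul, Finset.mul_sum]; congr! 1; ring⟩ _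

end
end Trop

/-! ### One-variable valuation theory -/

namespace Trop
open Polynomial NNReal

section
variable {L : Type*} [Field L] (v : Valuation L ℝ≥0)

/-- The residue field of an algebraically closed valued field is infinite; the required element is
a root of `∏ (X - b) - 1`. -/
lemma exists_unit_sub [IsAlgClosed L] (s : Finset L) (hs : ∀ b ∈ s, v b ≤ 1) :
    ∃ u, ∀ b ∈ s, v (u - b) = 1 := by
  rcases s.eq_empty_or_nonempty with rfl | hne
  · exact ⟨0, by simp⟩
  have hm : (∏ b ∈ s, (X - C b)).Monic := monic_prod_of_monic _ _ fun b _ => monic_X_sub_C b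
  have hd : (∏ b ∈ s, (X - C b)).degree = (s.card : WithBot ℕ) := by
    rw [degree_prod]; simp
  have hlt : (1 : L[X]).degree < (∏ b ∈ s, (X - C b)).degree := by
    rw [hd, degree_one]; exact_mod_cast hne.card_pos
  obtain ⟨u, hu⟩ := IsAlgClosed.exists_root (∏ b ∈ s, (X - C b) - 1) (by
    rw [degree_sub_eq_left_of_degree_lt hlt, hd]
    exact_mod_cast hne.card_pos.ne')
  have hprod : ∏ b ∈ s, v (u - b) = 1 := by
    have : ∏ b ∈ s, (u - b) = 1 := by
      have := hu.eq_zero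
      rw [eval_sub, eval_prod, eval_one, sub_eq_zero] at this
      simpa using this
    rw [← map_prod, this, map_one]
  have hu1 : v u ≤ 1 := by
    by_contra! h
    have : ∀ b ∈ s, v (u - b) = v u := fun b hb =>
      v.map_sub_eq_of_lt_left ((hs b hb).trans_lt h)
    rw [Finset.prod_congr rfl this, Finset.prod_const] at hprod
    exact (one_lt_pow₀ h hne.card_pos.ne').ne' hprod
  have hle : ∀ b ∈ s, v (u - b) ≤ 1 := fun b hb => v.map_sub_le hu1 (hs b hb)
  exact ⟨u, (Finset.prod_eq_one_iff_of_le_one' hle).1 hprod⟩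

lemma exists_generic [IsAlgClosed L] (hsurj : ∀ r : ℝ≥0, r ≠ 0 → ∃ y : L, v y = r)
    (s : Finset L) (r : ℝ≥0) (hr : r ≠ 0) :
    ∃ u, ∀ b ∈ s, v (u - b) = max r (v b) := by
  classical
  obtain ⟨c, hc⟩ := hsurj r hr
  have hc0 : c ≠ 0 := by rintro rfl; simp at hc; exact hr hc.symm
  obtain ⟨u, hu⟩ := exists_unit_sub v (insert 0 ((s.filter fun b => v b ≤ r).image (· / c))) (by
    intro b hb
    rcases Finset.mem_insert.1 hb with rfl | hb
    · simp
    · obtain ⟨b, hb', rfl⟩ := Finset.mem_image.1 hb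
      rw [map_div₀, hc]
      exact div_le_one_of_le₀ (Finset.mem_filter.1 hb').2 zero_le)
  have hu0 : v (c * u) = r := by
    have := hu 0 (by simp)
    rw [sub_zero] at this
    rw [map_mul, this, hc, mul_one]
  refine ⟨c * u, fun b hb => ?_⟩
  rcases le_or_gt (v b) r with h | h
  · rw [max_eq_left h]
    have := hu (b / c) (Finset.mem_insert_of_mem (Finset.mem_image_of_mem _ (by simp [hb, h])))
    rw [show c * u - b = c * (u - b / c) by field_simp, map_mul, this, hc, mul_one]
  · rw [max_eq_right h.le, v.map_sub_eq_of_lt_right (by rwa [hu0])]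

/-- The exponential function with values in `ℝ≥0`. -/
noncomputable def ex (x : ℝ) : ℝ≥0 := (Real.exp x).toNNReal

lemma coe_ex (x : ℝ) : (ex x : ℝ) = Real.exp x := Real.coe_toNNReal _ (Real.exp_pos x).le

lemma ex_ne_zero (x : ℝ) : ex x ≠ 0 := by
  rw [← NNReal.coe_ne_zero, coe_ex]; exact (Real.exp_pos x).ne'

lemma log_ex (x : ℝ) : Real.log (ex x) = x := by rw [coe_ex, Real.log_exp]

lemma ex_log {a : ℝ≥0} (ha : a ≠ 0) : ex (Real.log a) = a := by
  rw [← NNReal.coe_inj, coe_ex, Real.exp_log (by positivity)]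

lemma log_max {a b : ℝ≥0} (ha : a ≠ 0) (hb : b ≠ 0) :
    Real.log (max a b : ℝ≥0) = max (Real.log a) (Real.log b) := by
  have ha' : (0 : ℝ) < a := by positivity
  have hb' : (0 : ℝ) < b := by positivity
  rcases le_total a b with h | h
  · rw [max_eq_right h, max_eq_right (Real.log_le_log ha' (by exact_mod_cast h))]
  · rw [max_eq_left h, max_eq_left (Real.log_le_log hb' (by exact_mod_cast h))]

lemma log_inj {a b : ℝ≥0} (ha : a ≠ 0) (hb : b ≠ 0) (h : Real.log a = Real.log b) : a = b := by
  have ha' : (0 : ℝ) < a := by positivity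
  have hb' : (0 : ℝ) < b := by positivity
  exact_mod_cast Real.log_injOn_pos ha' hb' h

/-- The possible vectors of distances of a point `s` to finitely many given distinct points `a ρ`:
they are determined by a nearest point `a ρ₀` and the distance to it. -/
lemma exists_dist_iff [IsAlgClosed L] (hsurj : ∀ r : ℝ≥0, r ≠ 0 → ∃ y : L, v y = r)
    {Z : Type*} [Fintype Z] [Nonempty Z] (a : Z → L) (ha : Function.Injective a) (μ : Z → ℝ) :
    (∃ s, ∀ ρ, s - a ρ ≠ 0 ∧ μ ρ = Real.log (v (s - a ρ))) ↔
      ∃ ρ₀, ∀ ρ, ρ ≠ ρ₀ → μ ρ = max (μ ρ₀) (Real.log (v (a ρ₀ - a ρ))) := by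
  classical
  constructor
  · rintro ⟨s, hs⟩
    obtain ⟨ρ₀, -, hρ₀⟩ := Finset.exists_min_image Finset.univ (fun ρ => v (s - a ρ))
      Finset.univ_nonempty
    refine ⟨ρ₀, fun ρ hρ => ?_⟩
    have hne : a ρ₀ - a ρ ≠ 0 := sub_ne_zero.2 fun h => hρ (ha h.symm)
    have h1 : v (s - a ρ) ≠ 0 := (v.ne_zero_iff).2 (hs ρ).1
    have h2 : v (s - a ρ₀) ≠ 0 := (v.ne_zero_iff).2 (hs ρ₀).1
    have h3 : v (a ρ₀ - a ρ) ≠ 0 := (v.ne_zero_iff).2 hne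
    rw [(hs ρ).2, (hs ρ₀).2, ← log_max h2 h3]
    congr 2
    have hmin := hρ₀ ρ (Finset.mem_univ _)
    refine le_antisymm ?_ (max_le hmin ?_)
    · have := v.map_add (s - a ρ₀) (a ρ₀ - a ρ)
      rwa [sub_add_sub_cancel] at this
    · have := v.map_sub (s - a ρ) (s - a ρ₀)
      rw [sub_sub_sub_cancel_left, max_eq_left hmin] at this
      exact this
  · rintro ⟨ρ₀, h⟩
    obtain ⟨u, hu⟩ := exists_generic v hsurj (Finset.univ.image fun ρ => a ρ - a ρ₀)
      (ex (μ ρ₀)) (ex_ne_zero _)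
    have he := ex_ne_zero (μ ρ₀)
    refine ⟨u + a ρ₀, fun ρ => ?_⟩
    have h1 := hu (a ρ - a ρ₀) (Finset.mem_image_of_mem _ (Finset.mem_univ _))
    rw [show u - (a ρ - a ρ₀) = u + a ρ₀ - a ρ by ring] at h1
    refine ⟨?_, ?_⟩
    · rw [← v.ne_zero_iff, h1]
      exact (lt_max_of_lt_left (pos_iff_ne_zero.2 he)).ne'
    · rw [h1]
      by_cases hρ : ρ = ρ₀
      · subst hρ
        simp [log_ex]
      · have hne : a ρ - a ρ₀ ≠ 0 := sub_ne_zero.2 fun h => hρ (ha h)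
        rw [log_max he ((v.ne_zero_iff).2 hne), h ρ hρ, v.map_sub_swap (a ρ₀), log_ex]

/-- `p` has, with respect to the radius `r`, a strictly dominant monomial. -/
def Dom (r : ℝ≥0) (p : L[X]) : Prop :=
  ∃ j, p.coeff j ≠ 0 ∧ ∀ k, k ≠ j → v (p.coeff k) * r ^ k < v (p.coeff j) * r ^ j

variable {v}

lemma Dom.mul {r : ℝ≥0} (hr : r ≠ 0) {p q : L[X]} (hp : Dom v r p) (hq : Dom v r q) :
    Dom v r (p * q) := by
  classical
  obtain ⟨i, hi0, hi⟩ := hp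
  obtain ⟨j, hj0, hj⟩ := hq
  have hvi : v (p.coeff i) ≠ 0 := (v.ne_zero_iff).2 hi0
  have hvj : v (q.coeff j) ≠ 0 := (v.ne_zero_iff).2 hj0
  have hM : 0 < (v (p.coeff i) * r ^ i) * (v (q.coeff j) * r ^ j) := by positivity
  have hle : ∀ k, v (p.coeff k) * r ^ k ≤ v (p.coeff i) * r ^ i := fun k => by
    by_cases h : k = i
    · rw [h]
    · exact (hi k h).le
  have hlt : ∀ a b, (a, b) ≠ (i, j) → (v (p.coeff a) * r ^ a) * (v (q.coeff b) * r ^ b) <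
      (v (p.coeff i) * r ^ i) * (v (q.coeff j) * r ^ j) := by
    intro a b hab
    by_cases hb : b = j
    · have ha : a ≠ i := fun h => hab (by rw [h, hb])
      rw [hb]
      exact mul_lt_mul_of_pos_right (hi a ha) (by positivity)
    · exact (mul_le_mul_left (hle a) _).trans_lt
        (mul_lt_mul_of_pos_left (hj b hb) (by positivity))
  have hlt' : ∀ a b, (a, b) ≠ (i, j) → v (p.coeff a * q.coeff b) * r ^ (a + b) <
      (v (p.coeff i) * r ^ i) * (v (q.coeff j) * r ^ j) := by
    intro a b hab
    convert hlt a b hab using 1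
    rw [map_mul, pow_add]; ring
  have hmain : v ((p * q).coeff (i + j)) = v (p.coeff i * q.coeff j) := by
    rw [coeff_mul]
    refine v.map_sum_eq_of_lt (j := (i, j)) (f := fun x : ℕ × ℕ => p.coeff x.1 * q.coeff x.2)
      (by simp) ?_
    rintro ⟨a, b⟩ hab
    rw [Finset.mem_sdiff, Finset.HasAntidiagonal.mem_antidiagonal, Finset.mem_singleton] at hab
    have h1 := hlt' a b hab.2
    rw [hab.1] at h1
    refine lt_of_mul_lt_mul_right (a := r ^ (i + j)) (h1.trans_eq ?_) zero_le
    simp only [map_mul, pow_add]; ring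
  refine ⟨i + j, ?_, fun k hk => ?_⟩
  · rw [← v.ne_zero_iff, hmain, map_mul]; positivity
  · rw [hmain]
    have : v (p.coeff i * q.coeff j) * r ^ (i + j) =
        (v (p.coeff i) * r ^ i) * (v (q.coeff j) * r ^ j) := by
      rw [map_mul, pow_add]; ring
    rw [this, ← lt_div_iff₀ (by positivity), coeff_mul]
    refine v.map_sum_lt (by positivity) ?_
    rintro ⟨a, b⟩ hab
    rw [Finset.HasAntidiagonal.mem_antidiagonal] at hab
    rw [lt_div_iff₀ (by positivity), ← hab]
    exact hlt' a b (by rintro h; cases h; exact hk hab.symm)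

lemma dom_X_sub_C {r : ℝ≥0} (hr : r ≠ 0) {b : L} (hb : v b ≠ r) : Dom v r (X - C b) := by
  rcases lt_or_gt_of_ne hb with h | h
  · refine ⟨1, by simp, fun k hk => ?_⟩
    rcases Nat.eq_zero_or_pos k with rfl | hk'
    · simpa using h
    · have h2 : k - 1 + 1 = k := by omega
      have : (X - C b).coeff k = 0 := by
        rw [coeff_sub, coeff_X_of_ne_one hk, coeff_C_of_ne_zero hk'.ne', sub_zero]
      rw [this]
      simpa using pos_iff_ne_zero.2 hr
  · have hb0 : b ≠ 0 := by rintro rfl; simp at h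
    refine ⟨0, by simpa using hb0, fun k hk => ?_⟩
    by_cases hk1 : k = 1
    · subst hk1; simpa using h
    · have : (X - C b).coeff k = 0 := by
        rw [coeff_sub, coeff_X_of_ne_one hk1, coeff_C_of_ne_zero hk, sub_zero]
      rw [this]
      simpa [pos_iff_ne_zero] using hb0

/-- Newton polygon criterion: `r` is the value of a root of `p` iff the maximum of the values of
the monomials of `p` at radius `r` is attained at least twice. -/
lemma exists_root_iff [IsAlgClosed L] {p : L[X]} (hp : p ≠ 0) {r : ℝ≥0} (hr : r ≠ 0) :
    (∃ β, p.eval β = 0 ∧ v β = r) ↔ ∃ i j, i ≠ j ∧ p.coeff i ≠ 0 ∧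
      v (p.coeff i) * r ^ i = v (p.coeff j) * r ^ j ∧
      ∀ k, v (p.coeff k) * r ^ k ≤ v (p.coeff i) * r ^ i := by
  classical
  constructor
  · rintro ⟨β, hβ, rfl⟩
    obtain ⟨i, hi, hmax⟩ := p.support.exists_max_image (fun k => v (p.coeff k) * v β ^ k)
      (support_nonempty.2 hp)
    have hi0 : p.coeff i ≠ 0 := mem_support_iff.1 hi
    have hvi : v (p.coeff i) ≠ 0 := (v.ne_zero_iff).2 hi0
    have hall : ∀ k, v (p.coeff k) * v β ^ k ≤ v (p.coeff i) * v β ^ i := by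
      intro k
      by_cases hk : k ∈ p.support
      · exact hmax k hk
      · rw [notMem_support_iff.1 hk]; simp
    by_contra! hcon
    have hstrict : ∀ k ∈ p.support \ {i}, v (p.coeff k * β ^ k) < v (p.coeff i * β ^ i) := by
      intro k hk
      rw [Finset.mem_sdiff, Finset.mem_singleton] at hk
      simp only [map_mul, map_pow]
      refine lt_of_le_of_ne (hall k) fun h => ?_
      obtain ⟨k', hk'⟩ := hcon i k (Ne.symm hk.2) hi0 h.symm
      exact absurd (hall k') (not_le.2 hk')
    have := v.map_sum_eq_of_lt hi (f := fun k => p.coeff k * β ^ k)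
      hstrict
    rw [eval_eq_sum, sum_def] at hβ
    rw [hβ] at this
    have h0 : v (p.coeff i * β ^ i) ≠ 0 := by simp only [map_mul, map_pow]; positivity
    exact h0 (by simpa using this.symm)
  · intro h
    by_contra! hcon
    have hdom : Dom v r p := by
      have hsp := (IsAlgClosed.splits p).eq_prod_roots
      rw [hsp]
      refine Dom.mul hr ⟨0, by simpa using hp, fun k hk => ?_⟩ ?_
      · rw [coeff_C_of_ne_zero hk]; simpa [pos_iff_ne_zero] using hp
      · have : ∀ b ∈ p.roots, v b ≠ r := fun b hb => hcon b (mem_roots'.1 hb).2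
        generalize p.roots = m at this
        induction m using Multiset.induction_on with
        | empty =>
          refine ⟨0, by simp, fun k hk => ?_⟩
          simp [coeff_one, hk]
        | cons b m ih =>
          rw [Multiset.map_cons, Multiset.prod_cons]
          exact Dom.mul hr (dom_X_sub_C hr (this b (by simp)))
            (ih fun c hc => this c (by simp [hc]))
    obtain ⟨a, ha0, ha⟩ := hdom
    obtain ⟨i, j, hij, hi0, he, hmax⟩ := h
    by_cases hia : i = a
    · subst hia
      exact (ha j (Ne.symm hij)).ne he.symm
    · exact absurd (hmax a) (not_le.2 (ha i hia))

end
end Trop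

/-! ### Perturbation of points of affine space -/

namespace Trop
open Polynomial NNReal

section
variable {L : Type*} [Field L] {v : Valuation L ℝ≥0}

lemma exists_eval_sub_lt (v : Valuation L ℝ≥0) (q : L[X]) {ε : ℝ≥0} (hε : 0 < ε) :
    ∃ δ > 0, ∀ x, v x ≤ δ → v (q.eval x - q.eval 0) < ε := by
  set M : ℝ≥0 := ∑ k ∈ q.divX.support, v (q.divX.coeff k) with hM
  refine ⟨min 1 (ε / (M + 1)), by positivity, fun x hx => ?_⟩
  have hx1 : v x ≤ 1 := hx.trans (min_le_left _ _)
  have hx2 : v x ≤ ε / (M + 1) := hx.trans (min_le_right _ _)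
  have hb : v (q.divX.eval x) ≤ M := by
    rw [eval_eq_sum, sum_def]
    refine v.map_sum_le fun k hk => ?_
    rw [map_mul, map_pow]
    refine (mul_le_of_le_one_right' (pow_le_one' hx1 k)).trans ?_
    exact Finset.single_le_sum (f := fun k => v (q.divX.coeff k)) (fun _ _ => zero_le) hk
  have he : q.eval x - q.eval 0 = q.divX.eval x * x := by
    conv_lhs => rw [← divX_mul_X_add q]
    simp
  rw [he, map_mul]
  calc v (q.divX.eval x) * v x ≤ M * (ε / (M + 1)) := mul_le_mul' hb hx2
    _ < (M + 1) * (ε / (M + 1)) := by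
        refine mul_lt_mul_of_pos_right (lt_add_of_pos_right _ one_pos) (by positivity)
    _ = ε := by field_simp

/-- Any point of `L^e` can be approximated by points outside a given hypersurface. The
approximation takes place on a line joining the point to a point off the hypersurface. -/
lemma exists_perturb_lt {K : Type*} [Field K] [Algebra K L]
    (v : Valuation L ℝ≥0) (hsurj : ∀ r : ℝ≥0, r ≠ 0 → ∃ y : L, v y = r) [Infinite L]
    {ι : Type*} [Finite ι] {e : ℕ} (c : ι → MvPolynomial (Fin e) K) (h : MvPolynomial (Fin e) K)
    (hh : h ≠ 0) (t₀ : Fin e → L) {ε : ℝ≥0} (hε : 0 < ε) :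
    ∃ t : Fin e → L, MvPolynomial.aeval t h ≠ 0 ∧
      ∀ i, v (MvPolynomial.aeval t (c i) - MvPolynomial.aeval t₀ (c i)) < ε := by
  classical
  obtain ⟨w, hw⟩ : ∃ w : Fin e → L, MvPolynomial.aeval w h ≠ 0 := by
    by_contra! hcon
    apply hh
    apply MvPolynomial.map_injective _ (algebraMap K L).injective
    rw [map_zero]
    refine MvPolynomial.funext fun x => ?_
    rw [MvPolynomial.eval_map, map_zero]
    exact hcon x
  let ln : Fin e → L[X] := fun j => C (t₀ j) + X * C (w j - t₀ j)
  have hev : ∀ (p : MvPolynomial (Fin e) K) (x : L), (MvPolynomial.aeval ln p).eval x =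
      MvPolynomial.aeval (fun j => t₀ j + x * (w j - t₀ j)) p := by
    intro p x
    have : (MvPolynomial.aeval (fun j => t₀ j + x * (w j - t₀ j)) :
        MvPolynomial (Fin e) K →ₐ[K] L) =
        ((Polynomial.aeval x : L[X] →ₐ[L] L).restrictScalars K).comp (MvPolynomial.aeval ln) := by
      ext j; simp [ln]
    rw [this]
    simp
  have hne : MvPolynomial.aeval ln h ≠ 0 := by
    intro h0
    have := hev h 1
    rw [h0] at this
    apply hw
    simpa using this.symm
  choose δ hδ hδ' using fun i => exists_eval_sub_lt v (MvPolynomial.aeval ln (c i)) hε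
  obtain ⟨d, hd, hdle⟩ : ∃ d > 0, ∀ i, d ≤ δ i := by
    have := Fintype.ofFinite ι
    refine ⟨(insert 1 (Finset.univ.image δ)).min' (by simp), ?_, fun i => ?_⟩
    · rw [gt_iff_lt, Finset.lt_min'_iff]
      intro y hy
      rcases Finset.mem_insert.1 hy with rfl | hy
      · exact one_pos
      · obtain ⟨i, -, rfl⟩ := Finset.mem_image.1 hy
        exact hδ i
    · exact Finset.min'_le _ _ (by simp)
  obtain ⟨r, hr, hr'⟩ := (Set.Ioc_infinite hd).exists_notMem_finset
    ((MvPolynomial.aeval ln h).roots.toFinset.image v)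
  obtain ⟨x, hx⟩ := hsurj r hr.1.ne'
  refine ⟨fun j => t₀ j + x * (w j - t₀ j), ?_, fun i => ?_⟩
  · rw [← hev]
    intro h0
    apply hr'
    rw [← hx]
    exact Finset.mem_image_of_mem _ (by simp [hne, h0])
  · have := hδ' i x ((hx.trans_le hr.2).trans (hdle i))
    rw [hev, hev] at this
    simpa using this

lemma exists_perturb {K : Type*} [Field K] [Algebra K L]
    (v : Valuation L ℝ≥0) (hsurj : ∀ r : ℝ≥0, r ≠ 0 → ∃ y : L, v y = r) [Infinite L]
    {ι : Type*} [Finite ι] {e : ℕ} (c : ι → MvPolynomial (Fin e) K) (h : MvPolynomial (Fin e) K)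
    (hh : h ≠ 0) (t₀ : Fin e → L) {ε : ℝ≥0} (hε : 0 < ε) :
    ∃ t : Fin e → L, MvPolynomial.aeval t h ≠ 0 ∧
      ∀ i, (MvPolynomial.aeval t₀ (c i) ≠ 0 →
          v (MvPolynomial.aeval t (c i)) = v (MvPolynomial.aeval t₀ (c i))) ∧
        (MvPolynomial.aeval t₀ (c i) = 0 → v (MvPolynomial.aeval t (c i)) < ε) := by
  classical
  have := Fintype.ofFinite ι
  obtain ⟨d, hd, hdε, hdle⟩ : ∃ d > 0, d ≤ ε ∧ ∀ i, MvPolynomial.aeval t₀ (c i) ≠ 0 →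
      d ≤ v (MvPolynomial.aeval t₀ (c i)) := by
    let s : Finset ℝ≥0 := insert ε ((Finset.univ.filter
      fun i => MvPolynomial.aeval t₀ (c i) ≠ 0).image fun i => v (MvPolynomial.aeval t₀ (c i)))
    refine ⟨s.min' (by simp [s]), ?_, Finset.min'_le _ _ (by simp [s]), fun i hi => ?_⟩
    · rw [gt_iff_lt, Finset.lt_min'_iff]
      intro y hy
      rcases Finset.mem_insert.1 hy with rfl | hy
      · exact hε
      · obtain ⟨i, hi, rfl⟩ := Finset.mem_image.1 hy
        exact pos_iff_ne_zero.2 ((v.ne_zero_iff).2 (Finset.mem_filter.1 hi).2)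
    · exact Finset.min'_le _ _ (Finset.mem_insert_of_mem
        (Finset.mem_image_of_mem (fun i => v (MvPolynomial.aeval t₀ (c i))) (by simpa using hi)))
  obtain ⟨t, ht, htc⟩ := exists_perturb_lt v hsurj c h hh t₀ hd
  refine ⟨t, ht, fun i => ⟨fun hi => ?_, fun hi => ?_⟩⟩
  · have := v.map_add_eq_of_lt_left ((htc i).trans_le (hdle i hi))
    rwa [add_sub_cancel] at this
  · have := htc i
    rw [hi, sub_zero] at this
    exact this.trans_le hdε

end

/-! ### Extension of points along integral and algebraic ring extensions -/

section
variable {A B L : Type*} [CommRing A] [CommRing B] [Algebra A B] [Field L] [IsAlgClosed L]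

/-- Lying over, for geometric points. -/
lemma exists_extend_integral [Algebra.IsIntegral A B] (hinj : Function.Injective (algebraMap A B))
    (ψ : A →+* L) : ∃ φ : B →+* L, φ.comp (algebraMap A B) = ψ := by
  have hprime : (RingHom.ker ψ).IsPrime := RingHom.ker_isPrime ψ
  obtain ⟨Q, -, hQ, hQc⟩ := Ideal.exists_ideal_over_prime_of_isIntegral
    (S := B) (RingHom.ker ψ) ⊥ (by
      rw [← RingHom.ker_eq_comap_bot, (RingHom.injective_iff_ker_eq_bot _).1 hinj]; exact bot_le)
  have hlo : Q.LiesOver (RingHom.ker ψ) := ⟨hQc.symm⟩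
  let _ : Algebra (A ⧸ RingHom.ker ψ) L := (RingHom.kerLift ψ).toAlgebra
  have hf : Module.IsTorsionFree (A ⧸ RingHom.ker ψ) L :=
    Module.isTorsionFree_iff_algebraMap_injective.2 (RingHom.kerLift_injective ψ)
  have hf' : Module.IsTorsionFree (A ⧸ RingHom.ker ψ) (B ⧸ Q) := by
    rw [Module.isTorsionFree_iff_algebraMap_injective, injective_iff_map_eq_zero]
    intro x hx
    obtain ⟨a, rfl⟩ := Ideal.Quotient.mk_surjective x
    rw [Ideal.Quotient.algebraMap_mk_of_liesOver, Ideal.Quotient.eq_zero_iff_mem] at hx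
    rw [Ideal.Quotient.eq_zero_iff_mem, ← hQc]
    exact hx
  let Φ : (B ⧸ Q) →ₐ[A ⧸ RingHom.ker ψ] L := IsAlgClosed.lift
  refine ⟨Φ.toRingHom.comp (Ideal.Quotient.mk Q), ?_⟩
  ext a
  have := Φ.commutes (Ideal.Quotient.mk _ a)
  rw [Ideal.Quotient.algebraMap_mk_of_liesOver] at this
  exact this

/-- A finitely generated algebraic extension of domains is generically integral, so that generic
geometric points extend. -/
lemma exists_extend_generic (L : Type*) [Field L] [IsAlgClosed L]
    [IsDomain A] [IsDomain B] [hft : Algebra.FiniteType A B]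
    [Algebra.IsAlgebraic A B] (hinj : Function.Injective (algebraMap A B)) :
    ∃ h : A, h ≠ 0 ∧ ∀ ψ : A →+* L, ψ h ≠ 0 → ∃ φ : B →+* L, φ.comp (algebraMap A B) = ψ := by
  obtain ⟨s, hs⟩ := hft.out
  obtain ⟨h, h0, hintg⟩ := Algebra.IsAlgebraic.exists_integral_multiples A s
  refine ⟨h, h0, fun ψ hψ => ?_⟩
  let Ah := Localization.Away h
  let Bh := Localization.Away (algebraMap A B h)
  let _ : Algebra Ah Bh := (Localization.awayMap (algebraMap A B) h).toAlgebra
  have hcomm : ∀ a : A, algebraMap Ah Bh (algebraMap A Ah a) = algebraMap B Bh (algebraMap A B a) :=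
    fun a => by
      rw [RingHom.algebraMap_toAlgebra]
      exact IsLocalization.map_eq (T := Submonoid.powers (algebraMap A B h)) _ a
  have hAh : Function.Injective (algebraMap Ah Bh) := by
    refine IsLocalization.map_injective_of_injective _ _ _ hinj
  have huA : IsUnit (algebraMap A Ah h) := IsLocalization.Away.algebraMap_isUnit h
  have huB : IsUnit (algebraMap B Bh (algebraMap A B h)) := by
    rw [← hcomm]; exact huA.map _
  have hcancel : ∀ x : Bh, IsIntegral Ah (x * algebraMap B Bh (algebraMap A B h)) →
      IsIntegral Ah x := by
    intro x hx
    obtain ⟨u, hu⟩ := huA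
    have : IsIntegral Ah (algebraMap Ah Bh (↑u⁻¹)) := isIntegral_algebraMap
    have h2 := hx.mul this
    rw [mul_assoc, ← hcomm, ← hu, ← map_mul, Units.mul_inv, map_one, mul_one] at h2
    exact h2
  have hB : ∀ b : B, IsIntegral Ah (algebraMap B Bh b) := by
    intro b
    have hb : b ∈ Algebra.adjoin A (s : Set B) := hs ▸ Algebra.mem_top
    induction hb using Algebra.adjoin_induction with
    | mem z hz =>
      apply hcancel
      rw [← map_mul, mul_comm, ← Algebra.smul_def]
      obtain ⟨P, hP, hPz⟩ := hintg z hz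
      refine ⟨P.map (algebraMap A Ah), hP.map _, ?_⟩
      rw [Polynomial.eval₂_map]
      have : (algebraMap Ah Bh).comp (algebraMap A Ah) =
        (algebraMap B Bh).comp (algebraMap A B) := RingHom.ext hcomm
      rw [this, ← Polynomial.hom_eval₂, hPz, map_zero]
    | algebraMap a => rw [← hcomm]; exact isIntegral_algebraMap
    | add x y _ _ hx hy => rw [map_add]; exact hx.add hy
    | mul x y _ _ hx hy => rw [map_mul]; exact hx.mul hy
  have hBh : Algebra.IsIntegral Ah Bh := by
    refine ⟨fun x => ?_⟩
    obtain ⟨n, b, hb⟩ := IsLocalization.Away.surj (algebraMap A B h) x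
    have key : ∀ n (x : Bh), IsIntegral Ah (x * algebraMap B Bh (algebraMap A B h) ^ n) →
        IsIntegral Ah x := by
      intro n
      induction n with
      | zero => intro x hx; simpa using hx
      | succ k ih =>
        intro x hx
        refine ih x (hcancel _ ?_)
        rwa [mul_assoc, ← pow_succ]
    exact key n x (hb ▸ hB b)
  obtain ⟨Φ, hΦ⟩ := exists_extend_integral hAh
    (IsLocalization.Away.lift (S := Ah) h (g := ψ) (IsUnit.mk0 _ hψ))
  refine ⟨Φ.comp (algebraMap B Bh), ?_⟩
  ext a
  have := RingHom.congr_fun hΦ (algebraMap A Ah a)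
  rw [IsLocalization.Away.lift_eq, RingHom.comp_apply, hcomm] at this
  exact this
end
end Trop

/-! ### Tropicalization of units in an integral extension of a polynomial ring -/

namespace Trop
open Polynomial NNReal

section
variable {L : Type*} [Field L]

/-- Roots of a minimal polynomial over an integrally closed domain, specialized along `ψ`, are
values of geometric points above `ψ`. -/
lemma exists_extend_root [IsAlgClosed L] {A R : Type*} [CommRing A] [IsDomain A]
    [IsIntegrallyClosed A] [CommRing R] [IsDomain R] [Algebra A R] [Algebra.IsIntegral A R]
    (hinj : Function.Injective (algebraMap A R)) (x : R) (ψ : A →+* L) (β : L)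
    (hβ : ((minpoly A x).map ψ).eval β = 0) :
    ∃ φ : R →+* L, φ.comp (algebraMap A R) = ψ ∧ φ x = β := by
  have : Module.IsTorsionFree A R := Module.isTorsionFree_iff_algebraMap_injective.2 hinj
  have hx : IsIntegral A x := Algebra.IsIntegral.isIntegral x
  let e := minpoly.equivAdjoin hx
  let ψ' : Algebra.adjoin A {x} →+* L :=
    (AdjoinRoot.lift ψ β (by rwa [eval_map] at hβ)).comp (e.symm : _ →+* AdjoinRoot (minpoly A x))
  have : Algebra.IsIntegral (Algebra.adjoin A {x}) R := Algebra.IsIntegral.tower_top (R := A)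
  obtain ⟨φ, hφ⟩ := exists_extend_integral (A := Algebra.adjoin A {x}) (B := R)
    Subtype.val_injective ψ'
  refine ⟨φ, ?_, ?_⟩
  · ext a
    have := RingHom.congr_fun hφ (algebraMap A _ a)
    rw [RingHom.comp_apply, ← IsScalarTower.algebraMap_apply] at this
    rw [RingHom.comp_apply, this]
    simp [ψ']
  · have := RingHom.congr_fun hφ ⟨x, Algebra.self_mem_adjoin_singleton A x⟩
    rw [RingHom.comp_apply] at this
    refine Eq.trans this ?_
    have he : e.symm ⟨x, Algebra.self_mem_adjoin_singleton A x⟩ = AdjoinRoot.root _ := by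
      rw [AlgEquiv.symm_apply_eq]
      ext
      simp [e]
    simp [ψ', he]

/-- Finitely many points different from `y` are separated from `y` by one of sufficiently many
functionals with coefficient vector `(1, N, N², …)`. -/
lemma exists_separating {n : ℕ} (y : Fin n → ℝ) (S : Finset (Fin n → ℝ)) (hy : y ∉ S) {M : ℕ}
    (hM : S.card * n < M) :
    ∃ N : Fin M, ∀ y' ∈ S, ∑ i : Fin n, ((N : ℕ) : ℝ) ^ (i : ℕ) * y i ≠
      ∑ i : Fin n, ((N : ℕ) : ℝ) ^ (i : ℕ) * y' i := by
  let q : (Fin n → ℝ) → ℝ[X] := fun y' => ∑ i : Fin n, C (y i - y' i) * X ^ (i : ℕ)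
  have hq : ∀ y' ∈ S, q y' ≠ 0 := by
    intro y' hy' h0
    apply hy
    convert hy' using 1
    ext i
    have := congrArg (fun p => p.coeff i) h0
    simp only [q, finsetSum_coeff, coeff_C_mul_X_pow, coeff_zero, Fin.val_inj,
      Finset.sum_ite_eq, Finset.mem_univ, if_true] at this
    linarith
  by_contra! hcon
  apply Finset.prod_ne_zero_iff.2 hq
  apply eq_zero_of_natDegree_lt_card_of_eval_eq_zero _ (f := fun N : Fin M => ((N : ℕ) : ℝ))
  · intro a b hab
    ext
    simpa using hab
  · intro N
    obtain ⟨y', hy', h⟩ := hcon N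
    rw [eval_prod]
    refine Finset.prod_eq_zero hy' ?_
    simp only [q, eval_finsetSum, eval_mul, eval_C, eval_pow, eval_X]
    rw [← sub_eq_zero, ← Finset.sum_sub_distrib] at h
    rw [← h]
    exact Finset.sum_congr rfl fun i _ => by ring
  · rw [Fintype.card_fin]
    refine lt_of_le_of_lt ?_ hM
    refine (natDegree_prod_le _ _).trans ?_
    rw [← smul_eq_mul]
    refine Finset.sum_le_card_nsmul _ _ _ fun y' _ => ?_
    refine natDegree_sum_le_of_forall_le _ _ fun i _ => ?_
    exact (natDegree_C_mul_X_pow_le _ _).trans i.2.le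

lemma exists_pos_le {α : Type*} [Finite α] (b : α → ℝ≥0) (hb : ∀ x, 0 < b x) :
    ∃ ε > 0, ∀ x, ε ≤ b x := by
  classical
  have := Fintype.ofFinite α
  refine ⟨(insert 1 (Finset.univ.image b)).min' (by simp), ?_, fun i => ?_⟩
  · rw [gt_iff_lt, Finset.lt_min'_iff]
    intro y hy
    rcases Finset.mem_insert.1 hy with rfl | hy
    · exact one_pos
    · obtain ⟨i, -, rfl⟩ := Finset.mem_image.1 hy
      exact hb i
  · exact Finset.min'_le _ _ (by simp)

lemma mul_ex_le_iff {a b : ℝ≥0} (ha : a ≠ 0) (hb : b ≠ 0) (r : ℝ) (i j : ℕ) :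
    a * ex r ^ i ≤ b * ex r ^ j ↔ Real.log a + i * r ≤ Real.log b + j * r := by
  have ha' : (0 : ℝ) < a := by positivity
  have hb' : (0 : ℝ) < b := by positivity
  have hr : (0 : ℝ) < ex r := by rw [coe_ex]; positivity
  rw [← NNReal.coe_le_coe]
  push_cast
  rw [← Real.log_le_log_iff (by positivity) (by positivity), Real.log_mul ha'.ne' (by positivity),
    Real.log_mul hb'.ne' (by positivity), Real.log_pow, Real.log_pow, log_ex]

/-- The statement that, for every finite family of nonzero polynomials in `e` variables, the set of
vectors of logarithmic absolute values at common non-vanishing points is semilinear. -/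
def TropPoly (K : Type*) [Field K] [Algebra K L] (v : Valuation L ℝ≥0) (e : ℕ) : Prop :=
  ∀ (n : ℕ) (c : Fin n → MvPolynomial (Fin e) K), (∀ i, c i ≠ 0) →
    SemiLin {w : Fin n → ℝ | ∃ t : Fin e → L, ∀ i, MvPolynomial.aeval t (c i) ≠ 0 ∧
      w i = Real.log (v (MvPolynomial.aeval t (c i)))}

lemma TropPoly.fintype {K : Type*} [Field K] [Algebra K L] {v : Valuation L ℝ≥0} {e : ℕ}
    (hP : TropPoly K v e) {ι : Type*} [Fintype ι] (c : ι → MvPolynomial (Fin e) K)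
    (hc : ∀ i, c i ≠ 0) :
    SemiLin {w : ι → ℝ | ∃ t : Fin e → L, ∀ i, MvPolynomial.aeval t (c i) ≠ 0 ∧
      w i = Real.log (v (MvPolynomial.aeval t (c i)))} := by
  let f := Fintype.equivFin ι
  refine ((hP _ (c ∘ f.symm) fun i => hc _).preimage (F := fun y => y ∘ f.symm)
    fun k => RatAff.coord _).of_eq fun w => ?_
  simp only [Set.mem_ofPred_eq]
  refine exists_congr fun t => ?_
  exact ⟨fun h i => h _, fun h i => by simpa using h (f i)⟩

/-- Simultaneous root conditions on the specializations of monic polynomials `μ N` are expressed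
by the Newton polygon in terms of the absolute values of the coefficients; by perturbing the
point, all nonzero coefficient polynomials may be assumed not to vanish there. -/
lemma exists_roots_iff {K : Type*} [Field K] [Algebra K L] [IsAlgClosed L]
    (v : Valuation L ℝ≥0) (hsurj : ∀ r : ℝ≥0, r ≠ 0 → ∃ y : L, v y = r)
    {e M D : ℕ} (μ : Fin M → (MvPolynomial (Fin e) K)[X]) (hμ : ∀ N, (μ N).Monic)
    (hD : ∀ N, (μ N).natDegree < D) (c : Fin M × Fin D → MvPolynomial (Fin e) K)
    (hc : ∀ x, (μ x.1).coeff x.2 ≠ 0 → c x = (μ x.1).coeff x.2)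
    (hc' : ∀ x, (μ x.1).coeff x.2 = 0 → c x = 1) (r : Fin M → ℝ) :
    (∃ t : Fin e → L, ∀ N, ∃ β, ((μ N).map (MvPolynomial.aeval t : _ →ₐ[K] L).toRingHom).eval β = 0
      ∧ v β = ex (r N)) ↔
    ∃ w : Fin M × Fin D → ℝ, (∃ t : Fin e → L, ∀ x, MvPolynomial.aeval t (c x) ≠ 0 ∧
        w x = Real.log (v (MvPolynomial.aeval t (c x)))) ∧
      ∀ N, ∃ i j : Fin D, i ≠ j ∧ (μ N).coeff i ≠ 0 ∧ (μ N).coeff j ≠ 0 ∧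
        w (N, i) + ((i : ℕ) : ℝ) * r N = w (N, j) + ((j : ℕ) : ℝ) * r N ∧
        ∀ k : Fin D, (μ N).coeff k ≠ 0 →
          w (N, k) + ((k : ℕ) : ℝ) * r N ≤ w (N, i) + ((i : ℕ) : ℝ) * r N := by
  classical
  have hne : ∀ (t : Fin e → L) N, (μ N).map (MvPolynomial.aeval t : _ →ₐ[K] L).toRingHom ≠ 0 :=
    fun t N => ((hμ N).map _).ne_zero
  have hcf : ∀ (t : Fin e → L) N k, ((μ N).map (MvPolynomial.aeval t : _ →ₐ[K] L).toRingHom).coeff k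
      = MvPolynomial.aeval t ((μ N).coeff k) := fun t N k => by simp [coeff_map]
  have hlt : ∀ N k, (μ N).coeff k ≠ 0 → k < D :=
    fun N k hk => (le_natDegree_of_ne_zero hk).trans_lt (hD N)
  have hcne : ∀ x, c x ≠ 0 := by
    intro x
    by_cases hx : (μ x.1).coeff x.2 = 0
    · rw [hc' x hx]; exact one_ne_zero
    · rwa [hc x hx]
  simp_rw [fun (t : Fin e → L) N => exists_root_iff (v := v) (hne t N) (ex_ne_zero (r N)), hcf]
  constructor
  · rintro ⟨t₀, ht₀⟩
    choose i j hij hi hv hk using ht₀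
    have hBpos : ∀ x : Fin M × Fin D, 0 < v (MvPolynomial.aeval t₀ ((μ x.1).coeff (i x.1))) *
        ex (r x.1) ^ i x.1 / ex (r x.1) ^ (x.2 : ℕ) := by
      intro x
      have h1 := pos_iff_ne_zero.2 (ex_ne_zero (r x.1))
      have h2 := pos_iff_ne_zero.2 ((v.ne_zero_iff).2 (hi x.1))
      positivity
    obtain ⟨ε, hε, hεle⟩ := exists_pos_le _ hBpos
    have : Infinite L := IsAlgClosed.instInfinite
    obtain ⟨t, ht, htc⟩ := exists_perturb v hsurj
      (fun x : Fin M × Fin D => (μ x.1).coeff x.2) (∏ x, c x)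
      (Finset.prod_ne_zero_iff.2 fun x _ => hcne x) t₀ hε
    have htx : ∀ x, MvPolynomial.aeval t (c x) ≠ 0 := by
      rw [map_prod] at ht
      exact fun x => Finset.prod_ne_zero_iff.1 ht x (Finset.mem_univ _)
    refine ⟨fun x => Real.log (v (MvPolynomial.aeval t (c x))), ⟨t, fun x => ⟨htx x, rfl⟩⟩,
      fun N => ?_⟩
    have hj : MvPolynomial.aeval t₀ ((μ N).coeff (j N)) ≠ 0 := by
      intro h0
      have := hv N
      rw [h0, map_zero, zero_mul] at this
      exact mul_ne_zero ((v.ne_zero_iff).2 (hi N)) (pow_ne_zero _ (ex_ne_zero _)) this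
    have hi' : (μ N).coeff (i N) ≠ 0 := fun h => hi N (by rw [h, map_zero])
    have hj' : (μ N).coeff (j N) ≠ 0 := fun h => hj (by rw [h, map_zero])
    have hti := (htc (N, ⟨i N, hlt N _ hi'⟩)).1 (hi N)
    have htj := (htc (N, ⟨j N, hlt N _ hj'⟩)).1 hj
    dsimp only at hti htj
    have hvi := (v.ne_zero_iff).2 (hi N)
    have hvj := (v.ne_zero_iff).2 hj
    refine ⟨⟨i N, hlt N _ hi'⟩, ⟨j N, hlt N _ hj'⟩, by simpa [Fin.ext_iff] using hij N, hi', hj',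
      ?_, fun k hk' => ?_⟩
    · dsimp only
      rw [hc (N, ⟨i N, hlt N _ hi'⟩) hi', hc (N, ⟨j N, hlt N _ hj'⟩) hj']
      rw [hti, htj]
      exact le_antisymm ((mul_ex_le_iff hvi hvj _ _ _).1 (hv N).le)
        ((mul_ex_le_iff hvj hvi _ _ _).1 (hv N).ge)
    · dsimp only
      rw [hc (N, ⟨i N, hlt N _ hi'⟩) hi', hc (N, k) hk']
      have hxk := htx (N, k)
      rw [hc (N, k) hk'] at hxk
      rw [hti]
      refine (mul_ex_le_iff ((v.ne_zero_iff).2 hxk) hvi _ _ _).1 ?_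
      by_cases h0 : MvPolynomial.aeval t₀ ((μ N).coeff k) = 0
      · refine (mul_le_mul_left ((htc (N, k)).2 h0).le _).trans ?_
        refine (mul_le_mul_left (hεle (N, k)) _).trans ?_
        rw [div_mul_cancel₀ _ (pow_ne_zero _ (ex_ne_zero _))]
      · have := (htc (N, k)).1 h0
        dsimp only at this
        rw [this]
        exact hk N k
  · rintro ⟨w, ⟨t, ht⟩, hw⟩
    refine ⟨t, fun N => ?_⟩
    obtain ⟨i, j, hij, hi, hj, he, hk⟩ := hw N
    have hval : ∀ k : Fin D, (μ N).coeff k ≠ 0 → v (MvPolynomial.aeval t ((μ N).coeff k)) ≠ 0 ∧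
        w (N, k) = Real.log (v (MvPolynomial.aeval t ((μ N).coeff k))) := by
      intro k hk
      have := ht (N, k)
      rw [hc (N, k) hk] at this
      exact ⟨(v.ne_zero_iff).2 this.1, this.2⟩
    rw [(hval i hi).2, (hval j hj).2] at he
    refine ⟨i, j, fun h => hij (Fin.ext h), (v.ne_zero_iff).1 (hval i hi).1, ?_, fun k => ?_⟩
    · exact le_antisymm ((mul_ex_le_iff (hval i hi).1 (hval j hj).1 _ _ _).2 he.le)
        ((mul_ex_le_iff (hval j hj).1 (hval i hi).1 _ _ _).2 he.ge)
    · by_cases hk0 : (μ N).coeff k = 0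
      · rw [hk0, map_zero, map_zero, zero_mul]; exact zero_le
      · have := hk ⟨k, hlt N k hk0⟩ hk0
        rw [(hval i hi).2, (hval ⟨k, hlt N k hk0⟩ hk0).2] at this
        exact (mul_ex_le_iff (hval ⟨k, hlt N k hk0⟩ hk0).1 (hval i hi).1 _ _ _).2 this

end
end Trop

namespace Trop
open Polynomial NNReal

section
variable {L : Type*} [Field L] [IsAlgClosed L] {K : Type*} [Field K] [Algebra K L]
  {v : Valuation L ℝ≥0}

/-- Tropicalizations of units of an integral extension of a polynomial ring are semilinear, if this
holds for tropicalizations of polynomials. A point `y` lies in the tropicalization of the fibre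
over `t` as soon as finitely many integral functionals `⟨(1, N, N², …), ·⟩` take on `y` values
which they attain on that fibre, and each of the latter conditions is a root condition on the
minimal polynomial of a monomial in the units. -/
lemma TropPoly.semiLin_units_fin (hsurj : ∀ r : ℝ≥0, r ≠ 0 → ∃ y : L, v y = r) {e : ℕ}
    (hP : TropPoly K v e) {R : Type*} [CommRing R] [IsDomain R] [Algebra K R]
    [Algebra (MvPolynomial (Fin e) K) R] [IsScalarTower K (MvPolynomial (Fin e) K) R]
    [Algebra.IsIntegral (MvPolynomial (Fin e) K) R]
    (hinj : Function.Injective (algebraMap (MvPolynomial (Fin e) K) R)) {n : ℕ} (f : Fin n → Rˣ) :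
    SemiLin {y : Fin n → ℝ | ∃ φ : R →ₐ[K] L, ∀ i, y i = Real.log (v (φ (f i)))} := by
  classical
  let A := MvPolynomial (Fin e) K
  have hfint : ∀ x : R, IsIntegral A x := fun x => Algebra.IsIntegral.isIntegral x
  let M : ℕ := (∏ i, (minpoly A (f i : R)).natDegree) * n + 1
  let x : Fin M → Rˣ := fun N => ∏ i : Fin n, f i ^ ((N : ℕ) ^ (i : ℕ))
  let μ : Fin M → A[X] := fun N => minpoly A (x N : R)
  have hμ : ∀ N, (μ N).Monic := fun N => minpoly.monic (hfint _)
  let D : ℕ := (Finset.univ.sup fun N => (μ N).natDegree) + 1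
  have hD : ∀ N, (μ N).natDegree < D := fun N =>
    Nat.lt_succ_of_le (Finset.le_sup (f := fun N => (μ N).natDegree) (Finset.mem_univ N))
  let c : Fin M × Fin D → A := fun x => if (μ x.1).coeff x.2 = 0 then 1 else (μ x.1).coeff x.2
  have hlogx : ∀ (φ : R →+* L) (N : Fin M), Real.log (v (φ (x N))) =
      ∑ i : Fin n, ((N : ℕ) : ℝ) ^ (i : ℕ) * Real.log (v (φ (f i))) := by
    intro φ N
    simp only [x, Units.coe_prod, Units.val_pow_eq_pow_val, map_prod, map_pow, NNReal.coe_prod,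
      NNReal.coe_pow]
    rw [Real.log_prod]
    · simp
    · intro i _
      have : v (φ (f i)) ≠ 0 := (v.ne_zero_iff).2 ((f i).isUnit.map φ).ne_zero
      positivity
  -- membership in the tropicalization in terms of root conditions
  have key : ∀ y : Fin n → ℝ, (∃ φ : R →ₐ[K] L, ∀ i, y i = Real.log (v (φ (f i)))) ↔
      ∃ t : Fin e → L, ∀ N, ∃ β,
        ((μ N).map (MvPolynomial.aeval t : _ →ₐ[K] L).toRingHom).eval β = 0 ∧
        v β = ex (∑ i : Fin n, ((N : ℕ) : ℝ) ^ (i : ℕ) * y i) := by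
    intro y
    constructor
    · rintro ⟨φ, hφ⟩
      refine ⟨fun j => φ (algebraMap A R (MvPolynomial.X j)), fun N => ⟨φ (x N), ?_, ?_⟩⟩
      · have h1 : (MvPolynomial.aeval fun j => φ (algebraMap A R (MvPolynomial.X j))) =
            φ.comp (IsScalarTower.toAlgHom K A R) := by
          ext j; simp [A]
        rw [h1, eval_map]
        have h2 := congrArg φ (minpoly.aeval A (x N : R))
        rw [map_zero] at h2
        rw [← h2, aeval_def]
        exact (hom_eval₂ _ _ (φ : R →+* L) _).symm
      · have h1 : v (φ (x N)) ≠ 0 := (v.ne_zero_iff).2 ((x N).isUnit.map φ).ne_zero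
        rw [← ex_log h1]
        congr 1
        simp_rw [hφ]
        exact hlogx φ N
    · rintro ⟨t, ht⟩
      let ψ : A →+* L := (MvPolynomial.aeval t : _ →ₐ[K] L).toRingHom
      by_contra hcon
      -- the finitely many points of the tropicalization of the fibre over `t`
      let S : Finset (Fin n → ℝ) := (Fintype.piFinset fun i =>
        ((minpoly A (f i : R)).map ψ).roots.toFinset.image fun β => Real.log (v β)).filter
          fun y => ∃ φ : R →ₐ[K] L, ∀ i, y i = Real.log (v (φ (f i)))
      have hS : S.card * n < M := by
        refine Nat.lt_succ_of_le (Nat.mul_le_mul_right _ ?_)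
        refine (Finset.card_filter_le _ _).trans ?_
        rw [Fintype.card_piFinset]
        refine Finset.prod_le_prod' fun i _ => ?_
        refine Finset.card_image_le.trans ((Multiset.toFinset_card_le _).trans ?_)
        exact (card_roots' _).trans natDegree_map_le
      obtain ⟨N, hN⟩ := exists_separating y S (fun h => hcon (Finset.mem_filter.1 h).2) hS
      obtain ⟨β, hβ, hvβ⟩ := ht N
      obtain ⟨φ, hφ, hφx⟩ := exists_extend_root hinj (x N : R) ψ β hβ
      have hφK : ∀ k : K, φ (algebraMap K R k) = algebraMap K L k := by
        intro k
        rw [IsScalarTower.algebraMap_apply K A R, ← RingHom.comp_apply, hφ]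
        exact (MvPolynomial.aeval t : _ →ₐ[K] L).commutes k
      let φ' : R →ₐ[K] L := { φ with commutes' := hφK }
      refine hN (fun i => Real.log (v (φ (f i)))) ?_ ?_
      · refine Finset.mem_filter.2 ⟨Fintype.mem_piFinset.2 fun i => ?_, φ', fun i => rfl⟩
        refine Finset.mem_image.2 ⟨φ (f i), ?_, rfl⟩
        rw [Multiset.mem_toFinset, mem_roots ((minpoly.monic (hfint _)).map _).ne_zero, IsRoot.def,
          eval_map, ← hφ]
        have h2 := congrArg φ (minpoly.aeval A (f i : R))
        rw [map_zero] at h2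
        rw [← h2, aeval_def]
        exact (hom_eval₂ _ _ φ _).symm
      · rw [← hlogx, hφx, hvβ, log_ex]
  have key2 := fun y : Fin n → ℝ => (key y).trans (exists_roots_iff v hsurj μ hμ hD c
    (fun x hx => if_neg hx) (fun x hx => if_pos hx) _)
  have hcne : ∀ x, c x ≠ 0 := by
    intro x
    dsimp only [c]
    split_ifs with h
    · exact one_ne_zero
    · exact h
  refine SemiLin.of_eq ?_ key2
  refine SemiLin.exists_pi (κ := Fin M × Fin D) ?_
  refine SemiLin.and ?_ ?_
  · exact (hP.fintype c hcne).preimage 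
      (F := fun (z : Fin n ⊕ (Fin M × Fin D) → ℝ) k => z (.inr k)) fun k => RatAff.coord _
  · have hr : ∀ N : Fin M, RatAff fun z : Fin n ⊕ (Fin M × Fin D) → ℝ =>
        ∑ i : Fin n, ((N : ℕ) : ℝ) ^ (i : ℕ) * z (.inl i) := fun N =>
      RatAff.sum _ fun i => by
        have := (RatAff.coord (ι := Fin n ⊕ (Fin M × Fin D)) (.inl i)).mul_nat
          ((N : ℕ) ^ (i : ℕ))
        push_cast at this
        exact this
    have hw : ∀ (N : Fin M) (i : Fin D), RatAff fun z : Fin n ⊕ (Fin M × Fin D) → ℝ =>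
        z (.inr (N, i)) + ((i : ℕ) : ℝ) * ∑ i : Fin n, ((N : ℕ) : ℝ) ^ (i : ℕ) * z (.inl i) :=
      fun N i => (RatAff.coord _).add ((hr N).mul_nat _)
    refine SemiLin.forall_fin fun N => SemiLin.exists_fin fun i => SemiLin.exists_fin fun j => ?_
    refine (SemiLin.of_prop _).and ((SemiLin.of_prop _).and ((SemiLin.of_prop _).and ?_))
    refine (SemiLin.eq (hw N i) (hw N j)).and (SemiLin.forall_fin fun k => SemiLin.imp_prop
      fun _ => SemiLin.le (hw N k) (hw N i))

lemma TropPoly.semiLin_units (hsurj : ∀ r : ℝ≥0, r ≠ 0 → ∃ y : L, v y = r) {e : ℕ}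
    (hP : TropPoly K v e) {R : Type*} [CommRing R] [IsDomain R] [Algebra K R]
    (g : MvPolynomial (Fin e) K →ₐ[K] R) (hg : g.IsIntegral)
    (hinj : Function.Injective g) {ι : Type*} [Fintype ι] (f : ι → Rˣ) :
    SemiLin {y : ι → ℝ | ∃ φ : R →ₐ[K] L, ∀ i, y i = Real.log (v (φ (f i)))} := by
  let _ : Algebra (MvPolynomial (Fin e) K) R := g.toRingHom.toAlgebra
  have : IsScalarTower K (MvPolynomial (Fin e) K) R :=
    IsScalarTower.of_algebraMap_eq fun x => (g.commutes x).symm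
  have : Algebra.IsIntegral (MvPolynomial (Fin e) K) R := ⟨hg⟩
  let en := Fintype.equivFin ι
  refine ((hP.semiLin_units_fin hsurj hinj (f ∘ en.symm)).preimage (F := fun y => y ∘ en.symm)
    fun k => RatAff.coord _).of_eq fun w => ?_
  simp only [Set.mem_ofPred_eq]
  refine exists_congr fun t => ?_
  exact ⟨fun h i => h _, fun h i => by simpa using h (en i)⟩

end
end Trop

/-! ### Tropicalization of polynomials, by induction on the number of variables -/

namespace Trop
open Polynomial NNReal

universe u

/-- Finitely many nonzero polynomials over a domain `A` split into linear factors over some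
finitely generated algebraic extension domain in which their leading coefficients, and the
differences of distinct roots, are invertible. -/
lemma exists_splitting_ring (A : Type u) [CommRing A] [IsDomain A] {n : ℕ} (c : Fin n → A[X])
    (hc : ∀ i, c i ≠ 0) :
    ∃ (R : Type u) (_ : CommRing R) (_ : IsDomain R) (_ : Algebra A R),
      Function.Injective (algebraMap A R) ∧ Algebra.FiniteType A R ∧ Algebra.IsAlgebraic A R ∧
      ∃ (N : ℕ) (ρ : Fin N → R) (m : Fin n → Fin N → ℕ) (H : A[X]), 0 < N ∧ H ≠ 0 ∧
        (∀ k, (H.map (algebraMap A R)).eval (ρ k) = 0) ∧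
        (∀ j k, j ≠ k → IsUnit (ρ j - ρ k)) ∧
        (∀ i, IsUnit (algebraMap A R (c i).leadingCoeff)) ∧
        ∀ i, (c i).map (algebraMap A R) = C (algebraMap A R (c i).leadingCoeff) *
          ∏ k, (X - C (ρ k)) ^ m i k := by
  classical
  let F := FractionRing A
  let E := AlgebraicClosure F
  have hAE : Function.Injective (algebraMap A E) := by
    rw [IsScalarTower.algebraMap_eq A F E]
    exact (algebraMap F E).injective.comp (IsFractionRing.injective A F)
  have halg : Algebra.IsAlgebraic A E := by
    have : Algebra.IsAlgebraic F E := inferInstance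
    exact (IsFractionRing.comap_isAlgebraic_iff (A := A) (K := F) (C := E)).2 this
  let H : A[X] := X * ∏ i, c i
  have hH : H ≠ 0 := mul_ne_zero X_ne_zero (Finset.prod_ne_zero_iff.2 fun i _ => hc i)
  have hHm : H.map (algebraMap A E) ≠ 0 := (Polynomial.map_ne_zero_iff hAE).2 hH
  let Z : Finset E := (H.map (algebraMap A E)).roots.toFinset
  let en := Z.equivFin
  let S : Finset E := Z ∪ (Finset.univ.image fun i => (algebraMap A E (c i).leadingCoeff)⁻¹) ∪
    ((Z ×ˢ Z).image fun x => (x.1 - x.2)⁻¹)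
  let R := Algebra.adjoin A (S : Set E)
  have hSR : ∀ x ∈ S, x ∈ R := fun x hx => Algebra.subset_adjoin hx
  have hRE : Function.Injective (algebraMap R E) := Subtype.val_injective
  have hunit : ∀ x : R, (x : E) ≠ 0 → (x : E)⁻¹ ∈ S → IsUnit x := by
    intro x hx hx'
    refine IsUnit.of_mul_eq_one ⟨_, hSR _ hx'⟩ ?_
    ext
    exact mul_inv_cancel₀ hx
  let ρ : Fin Z.card → R := fun k => ⟨(en.symm k : E), hSR _ (by simp [S])⟩
  have hρ : ∀ k, (ρ k : E) ∈ Z := fun k => (en.symm k).2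
  refine ⟨R, inferInstance, inferInstance, inferInstance, ?_, ?_, ?_, Z.card, ρ,
    fun i k => ((c i).map (algebraMap A E)).rootMultiplicity (ρ k : E), H, ?_, hH, ?_, ?_, ?_, ?_⟩
  · intro a b hab
    exact hAE (congrArg (algebraMap R E) hab)
  · exact (Subalgebra.fg_iff_finiteType _).1 (Subalgebra.fg_adjoin_finset S)
  · exact Algebra.IsAlgebraic.of_injective R.val hRE
  · refine Finset.card_pos.2 ⟨0, ?_⟩
    simp only [Z, Multiset.mem_toFinset, mem_roots hHm]
    simp [H]
  · intro k
    apply hRE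
    rw [map_zero, ← eval₂_at_apply, ← eval_map, Polynomial.map_map,
      ← IsScalarTower.algebraMap_eq A R E]
    have := hρ k
    simp only [Z, Multiset.mem_toFinset, mem_roots hHm] at this
    exact this
  · intro j k hjk
    have hne : (ρ j : E) ≠ ρ k := by
      intro h
      exact hjk (en.symm.injective (Subtype.ext h))
    refine hunit _ (sub_ne_zero.2 hne) ?_
    refine Finset.mem_union_right _ (Finset.mem_image.2 ⟨(ρ j, ρ k), ?_, rfl⟩)
    exact Finset.mem_product.2 ⟨hρ j, hρ k⟩
  · intro i
    refine hunit _ ?_ ?_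
    · have h1 : algebraMap A E (c i).leadingCoeff ≠ 0 :=
        (map_ne_zero_iff _ hAE).2 (leadingCoeff_ne_zero.2 (hc i))
      exact h1
    · refine Finset.mem_union_left _ (Finset.mem_union_right _ ?_)
      exact Finset.mem_image.2 ⟨i, Finset.mem_univ _, rfl⟩
  · intro i
    apply Polynomial.map_injective _ hRE
    rw [Polynomial.map_map, ← IsScalarTower.algebraMap_eq A R E]
    set p := (c i).map (algebraMap A E) with hp
    have hp0 : p ≠ 0 := (Polynomial.map_ne_zero_iff hAE).2 (hc i)
    have hsp : p.Splits := IsAlgClosed.splits p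
    have hlc : p.leadingCoeff = algebraMap A E (c i).leadingCoeff :=
      leadingCoeff_map_of_injective hAE _
    have h1 := hsp.eq_prod_roots
    rw [Finset.prod_multiset_map_count, hlc] at h1
    rw [h1]
    have hsub : p.roots.toFinset ⊆ Z := by
      intro x hx
      simp only [Z, Multiset.mem_toFinset, mem_roots hHm, mem_roots hp0] at hx ⊢
      simp only [H, IsRoot.def, Polynomial.map_mul, Polynomial.map_prod, eval_mul, eval_prod]
      refine mul_eq_zero_of_right _ (Finset.prod_eq_zero (Finset.mem_univ i) hx)
    rw [Finset.prod_subset hsub]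
    · simp only [Polynomial.map_mul, Polynomial.map_prod, map_C, Polynomial.map_pow,
        Polynomial.map_sub, map_X]
      congr 1
      rw [← Finset.prod_coe_sort]
      refine Fintype.prod_equiv en _ _ fun x => ?_
      have hx : (algebraMap R E) (ρ (en x)) = x := by simp [ρ]
      have hx' : (ρ (en x) : E) = x := hx
      rw [hx, hx', count_roots]
    · intro x _ hx
      rw [Multiset.mem_toFinset, ← Multiset.count_eq_zero] at hx
      rw [hx, pow_zero]

end Trop

namespace Trop
open Polynomial NNReal

universe u

lemma trdeg_of_isAlgebraic (K : Type u) [Field K] (e : ℕ) (R : Type u) [CommRing R] [IsDomain R]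
    [Algebra K R] [Algebra (MvPolynomial (Fin e) K) R] [IsScalarTower K (MvPolynomial (Fin e) K) R]
    [Algebra.IsAlgebraic (MvPolynomial (Fin e) K) R]
    (hinj : Function.Injective (algebraMap (MvPolynomial (Fin e) K) R)) :
    Algebra.trdeg K R = e := by
  have : FaithfulSMul (MvPolynomial (Fin e) K) R :=
    (faithfulSMul_iff_algebraMap_injective _ _).2 hinj
  rw [← trdeg_add_eq K (MvPolynomial (Fin e) K) (A := R),
    MvPolynomial.trdeg_of_isDomain, trdeg_eq_zero]
  simp

section
variable {L : Type*} [Field L] {K : Type u} [Field K] [Algebra K L]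
  {v : Valuation L ℝ≥0}

lemma aeval_cons {e : ℕ} (t : Fin e → L) (s : L) (p : MvPolynomial (Fin (e + 1)) K) :
    MvPolynomial.aeval (Fin.cons s t : Fin (e + 1) → L) p =
      ((MvPolynomial.finSuccEquiv K e p).map
        (MvPolynomial.aeval t : _ →ₐ[K] L).toRingHom).eval s := by
  rw [eval_map]
  let Φ : MvPolynomial (Fin (e + 1)) K →+* L :=
    (eval₂RingHom (MvPolynomial.aeval t : _ →ₐ[K] L).toRingHom s).comp
      (MvPolynomial.finSuccEquiv K e).toRingEquiv.toRingHom
  have : (MvPolynomial.aeval (Fin.cons s t : Fin (e + 1) → L) :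
      MvPolynomial (Fin (e + 1)) K →ₐ[K] L).toRingHom = Φ := by
    refine MvPolynomial.ringHom_ext (fun k => ?_) fun i => ?_
    · simp [Φ, MvPolynomial.finSuccEquiv_apply]
    · refine Fin.cases ?_ (fun j => ?_) i
      · simp [Φ, MvPolynomial.finSuccEquiv_apply]
      · simp [Φ, MvPolynomial.finSuccEquiv_apply]
  exact RingHom.congr_fun this p

lemma tropPoly_zero (K : Type u) [Field K] [Algebra K L] (v : Valuation L ℝ≥0) :
    TropPoly K v 0 := by
  intro n c _
  have : SemiLin {w : Fin n → ℝ | ∀ i, MvPolynomial.aeval (default : Fin 0 → L) (c i) ≠ 0 ∧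
      w i = Real.log (v (MvPolynomial.aeval (default : Fin 0 → L) (c i)))} :=
    SemiLin.forall_fin fun i => (SemiLin.of_prop _).and
      (SemiLin.eq (RatAff.coord i) (RatAff.const _))
  exact this.of_eq fun w => Unique.exists_iff

variable [IsAlgClosed L]

/-- Units of finitely generated domains algebraic over a polynomial ring in `e` variables, by
Noether normalization. -/
lemma TropPoly.semiLin_units_of_finiteType (hsurj : ∀ r : ℝ≥0, r ≠ 0 → ∃ y : L, v y = r) {e : ℕ}
    (hP : TropPoly K v e) {R : Type u} [CommRing R] [IsDomain R] [Algebra K R]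
    [Algebra (MvPolynomial (Fin e) K) R] [IsScalarTower K (MvPolynomial (Fin e) K) R]
    [Algebra.IsAlgebraic (MvPolynomial (Fin e) K) R] [Algebra.FiniteType K R]
    (hinj : Function.Injective (algebraMap (MvPolynomial (Fin e) K) R))
    {ι : Type*} [Fintype ι] (f : ι → Rˣ) :
    SemiLin {y : ι → ℝ | ∃ φ : R →ₐ[K] L, ∀ i, y i = Real.log (v (φ (f i)))} := by
  obtain ⟨s, g, hg, hgi⟩ := exists_integral_inj_algHom_of_fg K R
  have h1 := trdeg_of_isAlgebraic K e R hinj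
  have h2 : Algebra.trdeg K R = s := by
    let _ : Algebra (MvPolynomial (Fin s) K) R := g.toRingHom.toAlgebra
    have : IsScalarTower K (MvPolynomial (Fin s) K) R :=
      IsScalarTower.of_algebraMap_eq fun x => (g.commutes x).symm
    have : Algebra.IsIntegral (MvPolynomial (Fin s) K) R := ⟨hgi⟩
    exact trdeg_of_isAlgebraic K s R hg
  have : s = e := by exact_mod_cast h2.symm.trans h1
  subst this
  exact hP.semiLin_units hsurj g hgi hg f

/-- Induction step: over a generic point of the first `e` coordinates the polynomials split into
linear factors in the last coordinate `s`, and the possible vectors of distances of `s` to the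
roots are determined by the mutual distances of the roots. The latter are absolute values of
units in a finitely generated algebraic extension of the polynomial ring in `e` variables. -/
lemma TropPoly.succ (hsurj : ∀ r : ℝ≥0, r ≠ 0 → ∃ y : L, v y = r) {e : ℕ}
    (hP : TropPoly K v e) : TropPoly K v (e + 1) := by
  classical
  intro n c hc
  let A := MvPolynomial (Fin e) K
  let F := MvPolynomial.finSuccEquiv K e
  obtain ⟨R, _, _, _, hinj, hft, halg, N, ρ, m, H, hN, hH, hHρ, hρu, hlc, hfac⟩ :=
    exists_splitting_ring A (fun i => F (c i)) (fun i => by simpa using hc i)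
  let _ : Algebra K R := ((algebraMap A R).comp (algebraMap K A)).toAlgebra
  have : IsScalarTower K A R := IsScalarTower.of_algebraMap_eq fun x => rfl
  have : Algebra.FiniteType K R := Algebra.FiniteType.trans (S := A) inferInstance hft
  have : Nonempty (Fin N) := ⟨⟨0, hN⟩⟩
  obtain ⟨h, h0, hext⟩ := exists_extend_generic (A := A) (B := R) L hinj
  let f : Fin n ⊕ (Fin N × Fin N) → Rˣ := Sum.elim (fun i => (hlc i).unit)
    fun x => if hx : x.1 = x.2 then 1 else (hρu x.1 x.2 hx).unit
  have hf : ∀ j k, j ≠ k → (f (.inr (j, k)) : R) = ρ j - ρ k := by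
    intro j k hjk
    simp [f, hjk]
  have hS := hP.semiLin_units_of_finiteType hsurj hinj f
  -- a `K`-algebra homomorphism from `R` induces a point of affine space
  have hpt : ∀ (φ : R →ₐ[K] L) (t : Fin e → L),
      (φ : R →+* L).comp (algebraMap A R) = (MvPolynomial.aeval t : _ →ₐ[K] L).toRingHom →
      ∀ s, (∀ k, s - φ (ρ k) ≠ 0) → ∀ i,
        MvPolynomial.aeval (Fin.cons s t : Fin (e + 1) → L) (c i) ≠ 0 ∧
        Real.log (v (MvPolynomial.aeval (Fin.cons s t : Fin (e + 1) → L) (c i))) =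
          Real.log (v (φ (f (.inl i)))) + ∑ k, (m i k : ℝ) * Real.log (v (s - φ (ρ k))) := by
    intro φ t hφ s hs i
    have h1 : MvPolynomial.aeval (Fin.cons s t : Fin (e + 1) → L) (c i) =
        φ (f (.inl i)) * ∏ k, (s - φ (ρ k)) ^ m i k := by
      rw [aeval_cons, ← hφ, ← Polynomial.map_map, hfac i]
      simp [eval_prod, Polynomial.map_prod, f]
    have h2 : φ (f (.inl i)) ≠ 0 := ((f (.inl i)).isUnit.map φ).ne_zero
    have h3 : ∏ k, (s - φ (ρ k)) ^ m i k ≠ 0 :=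
      Finset.prod_ne_zero_iff.2 fun k _ => pow_ne_zero _ (hs k)
    rw [h1]
    refine ⟨mul_ne_zero h2 h3, ?_⟩
    rw [map_mul, NNReal.coe_mul, Real.log_mul (by simpa using h2) (by
      exact NNReal.coe_ne_zero.2 ((v.ne_zero_iff).2 h3))]
    congr 1
    rw [map_prod, NNReal.coe_prod, Real.log_prod]
    · simp
    · intro k _
      exact NNReal.coe_ne_zero.2 ((v.ne_zero_iff).2 (pow_ne_zero _ (hs k)))
  have hρinj : ∀ φ : R →ₐ[K] L, Function.Injective fun k => φ (ρ k) := by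
    intro φ j k hjk
    by_contra hne
    apply ((hρu j k hne).map φ).ne_zero
    rw [map_sub]
    exact sub_eq_zero.2 hjk
  have key : ∀ w : Fin n → ℝ, (∃ t : Fin (e + 1) → L, ∀ i, MvPolynomial.aeval t (c i) ≠ 0 ∧
      w i = Real.log (v (MvPolynomial.aeval t (c i)))) ↔
      ∃ z : (Fin n ⊕ (Fin N × Fin N)) ⊕ Fin N → ℝ,
        (∃ φ : R →ₐ[K] L, ∀ x, z (.inl x) = Real.log (v (φ (f x)))) ∧
        (∃ ρ₀, ∀ ρ, ρ ≠ ρ₀ → (z (.inr ρ) = z (.inr ρ₀) ∧ z (.inl (.inr (ρ₀, ρ))) ≤ z (.inr ρ₀)) ∨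
          (z (.inr ρ) = z (.inl (.inr (ρ₀, ρ))) ∧ z (.inr ρ₀) ≤ z (.inl (.inr (ρ₀, ρ))))) ∧
        ∀ i, w i = z (.inl (.inl i)) + ∑ k, (m i k : ℝ) * z (.inr k) := by
    intro w
    have hmax : ∀ a b c : ℝ, a = max b c ↔ (a = b ∧ c ≤ b) ∨ (a = c ∧ b ≤ c) := by
      intro a b c
      rcases le_total b c with hbc | hbc
      · rw [max_eq_right hbc]
        constructor
        · exact fun h => Or.inr ⟨h, hbc⟩
        · rintro (h | h)
          · exact h.1.trans (le_antisymm hbc h.2)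
          · exact h.1
      · rw [max_eq_left hbc]
        constructor
        · exact fun h => Or.inl ⟨h, hbc⟩
        · rintro (h | h)
          · exact h.1
          · exact h.1.trans (le_antisymm hbc h.2)
    simp_rw [← hmax]
    constructor
    · rintro ⟨t₀, ht₀⟩
      have : Infinite L := IsAlgClosed.instInfinite
      obtain ⟨t, ht, htc⟩ := exists_perturb v hsurj c (F.symm (H * C h)) (by
        simpa using ⟨hH, h0⟩) t₀ one_pos
      obtain ⟨s, t', rfl⟩ : ∃ (s : L) (t' : Fin e → L), t = Fin.cons s t' :=
        ⟨t 0, Fin.tail t, (Fin.cons_self_tail t).symm⟩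
      have ht1 := ht
      rw [aeval_cons, AlgEquiv.apply_symm_apply, Polynomial.map_mul, eval_mul, map_C, eval_C] at ht1
      have hh := right_ne_zero_of_mul ht1
      have hH' := left_ne_zero_of_mul ht1
      obtain ⟨φ₀, hφ₀⟩ := hext (MvPolynomial.aeval t' : _ →ₐ[K] L).toRingHom hh
      let φ : R →ₐ[K] L := { φ₀ with
        commutes' := fun k => by
          have := RingHom.congr_fun hφ₀ (algebraMap K A k)
          refine Eq.trans this ?_
          exact (MvPolynomial.aeval t' : _ →ₐ[K] L).commutes k }
      have hs : ∀ k, s - φ (ρ k) ≠ 0 := by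
        intro k hk
        apply hH'
        rw [sub_eq_zero.1 hk, ← hφ₀, ← Polynomial.map_map, eval_map]
        have := congrArg φ₀ (hHρ k)
        rw [map_zero, ← eval₂_at_apply] at this
        exact this
      have hp := hpt φ t' hφ₀ s hs
      refine ⟨Sum.elim (fun x => Real.log (v (φ (f x)))) fun k => Real.log (v (s - φ (ρ k))),
        ⟨φ, fun x => rfl⟩, ?_, fun i => ?_⟩
      · obtain ⟨ρ₀, hρ₀⟩ := (exists_dist_iff v hsurj _ (hρinj φ)
          fun k => Real.log (v (s - φ (ρ k)))).1 ⟨s, fun k => ⟨hs k, rfl⟩⟩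
        refine ⟨ρ₀, fun k hk => ?_⟩
        simp only [Sum.elim_inl, Sum.elim_inr]
        rw [hf _ _ (Ne.symm hk), map_sub φ]
        exact hρ₀ k hk
      · rw [(ht₀ i).2, ← ((htc i).1 (ht₀ i).1)]
        exact (hp i).2
    · rintro ⟨z, ⟨φ, hφ⟩, ⟨ρ₀, hρ₀⟩, hw⟩
      obtain ⟨s, hs⟩ := (exists_dist_iff v hsurj _ (hρinj φ) fun k => z (.inr k)).2
        ⟨ρ₀, fun k hk => by
          rw [hρ₀ k hk, hφ, hf _ _ (Ne.symm hk), map_sub φ]⟩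
      let t : Fin e → L := fun j => φ (algebraMap A R (MvPolynomial.X j))
      have ht : (φ : R →+* L).comp (algebraMap A R) =
          (MvPolynomial.aeval t : _ →ₐ[K] L).toRingHom := by
        have h1 : MvPolynomial.aeval t = φ.comp (IsScalarTower.toAlgHom K A R) := by
          ext j; simp [A, t]
        rw [h1]
        rfl
      have hp := hpt φ t ht s fun k => (hs k).1
      refine ⟨Fin.cons s t, fun i => ⟨(hp i).1, ?_⟩⟩
      rw [(hp i).2, hw i, hφ]
      congr 1
      exact Finset.sum_congr rfl fun k _ => by rw [(hs k).2]
  refine SemiLin.of_eq ?_ key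
  refine SemiLin.exists_pi (κ := (Fin n ⊕ (Fin N × Fin N)) ⊕ Fin N) ?_
  refine SemiLin.and ?_ (SemiLin.and ?_ ?_)
  · exact hS.preimage (F := fun (z : Fin n ⊕ ((Fin n ⊕ (Fin N × Fin N)) ⊕ Fin N) → ℝ) x =>
      z (.inr (.inl x))) fun k => RatAff.coord _
  · refine SemiLin.exists_fin fun ρ₀ => SemiLin.forall_fin fun k => SemiLin.imp_prop fun _ => ?_
    exact ((SemiLin.eq (RatAff.coord _) (RatAff.coord _)).and
      (SemiLin.le (RatAff.coord _) (RatAff.coord _))).or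
      ((SemiLin.eq (RatAff.coord _) (RatAff.coord _)).and
      (SemiLin.le (RatAff.coord _) (RatAff.coord _)))
  · refine SemiLin.forall_fin fun i => SemiLin.eq (RatAff.coord _) ((RatAff.coord _).add ?_)
    exact RatAff.sum _ fun k => (RatAff.coord _).mul_nat _

lemma tropPoly (hsurj : ∀ r : ℝ≥0, r ≠ 0 → ∃ y : L, v y = r) (e : ℕ) : TropPoly K v e := by
  induction e with
  | zero => exact tropPoly_zero K v
  | succ e ih => exact ih.succ hsurj

/-- Tropicalizations of units of finitely generated domains are semilinear. -/
lemma semiLin_units (hsurj : ∀ r : ℝ≥0, r ≠ 0 → ∃ y : L, v y = r)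
    {R : Type*} [CommRing R] [IsDomain R] [Algebra K R] [Algebra.FiniteType K R]
    {ι : Type*} [Fintype ι] (f : ι → Rˣ) :
    SemiLin {y : ι → ℝ | ∃ φ : R →ₐ[K] L, ∀ i, y i = Real.log (v (φ (f i)))} := by
  obtain ⟨s, g, hg, hgi⟩ := exists_integral_inj_algHom_of_fg K R
  exact (tropPoly hsurj s).semiLin_units hsurj g hgi hg f

end
end Trop

/-! ### Subsets defined by inequalities -/

namespace Trop
open Polynomial NNReal

section
variable {L : Type*} [Field L] [IsAlgClosed L] {K : Type*} [Field K] [Algebra K L]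
  {v : Valuation L ℝ≥0}

/-- The inequality `v x ≤ γ` is witnessed by an element `s` such that `v s = v (x + s) = γ`. This
turns inequalities into equations between absolute values of units of the localization of a
polynomial ring over `R`. -/
lemma semiLin_of_le (hsurj : ∀ r : ℝ≥0, r ≠ 0 → ∃ y : L, v y = r)
    {R : Type*} [CommRing R] [IsDomain R] [Algebra K R] [Algebra.FiniteType K R] {n q : ℕ}
    (f : Fin n → Rˣ) (g : Fin q → R) (γ : Fin q → ℝ≥0) (hγ : ∀ j, γ j ≠ 0) :
    SemiLin {y : Fin n → ℝ | ∃ φ : R →ₐ[K] L, (∀ j, v (φ (g j)) ≤ γ j) ∧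
      ∀ i, y i = Real.log (v (φ (f i)))} := by
  classical
  let B := MvPolynomial (Fin q) R
  let a : Fin q → B := fun j => MvPolynomial.X j
  let b : Fin q → B := fun j => MvPolynomial.C (g j) + MvPolynomial.X j
  have ha : ∀ j, a j ≠ 0 := fun j => MvPolynomial.X_ne_zero j
  have hb : ∀ j, b j ≠ 0 := by
    intro j h0
    have := congrArg (MvPolynomial.eval fun _ => 1 - g j) h0
    simp [b] at this
  let w : B := ∏ j, a j * b j
  have hw : w ≠ 0 := Finset.prod_ne_zero_iff.2 fun j _ => mul_ne_zero (ha j) (hb j)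
  let R' := Localization.Away w
  have hdom : IsDomain R' :=
    IsLocalization.isDomain_localization (powers_le_nonZeroDivisors_of_noZeroDivisors hw)
  have hft1 : Algebra.FiniteType K B := Algebra.FiniteType.trans (S := R) inferInstance inferInstance
  have hft2 : Algebra.FiniteType B R' := IsLocalization.finiteType_of_monoid_fg (.powers w) _
  have hft : Algebra.FiniteType K R' := Algebra.FiniteType.trans (S := B) hft1 hft2
  have hwu : IsUnit (algebraMap B R' w) := IsLocalization.Away.algebraMap_isUnit w
  have hau : ∀ j, IsUnit (algebraMap B R' (a j)) := fun j =>
    isUnit_of_dvd_unit (map_dvd _ ((dvd_mul_right _ _).trans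
      (Finset.dvd_prod_of_mem (fun j => a j * b j) (Finset.mem_univ j)))) hwu
  have hbu : ∀ j, IsUnit (algebraMap B R' (b j)) := fun j =>
    isUnit_of_dvd_unit (map_dvd _ ((dvd_mul_left _ _).trans
      (Finset.dvd_prod_of_mem (fun j => a j * b j) (Finset.mem_univ j)))) hwu
  let F : Fin n ⊕ (Fin q ⊕ Fin q) → R'ˣ := Sum.elim
    (fun i => Units.map ((algebraMap B R').comp MvPolynomial.C).toMonoidHom (f i))
    (Sum.elim (fun j => (hau j).unit) fun j => (hbu j).unit)
  have hS := semiLin_units (K := K) hsurj F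
  have key : ∀ y : Fin n → ℝ, (∃ φ : R →ₐ[K] L, (∀ j, v (φ (g j)) ≤ γ j) ∧
      ∀ i, y i = Real.log (v (φ (f i)))) ↔
      ∃ z : Fin n ⊕ (Fin q ⊕ Fin q) → ℝ,
        (∃ φ : R' →ₐ[K] L, ∀ x, z x = Real.log (v (φ (F x)))) ∧
        (∀ i, y i = z (.inl i)) ∧ ∀ x, z (.inr x) = Real.log ((Sum.elim γ γ x : ℝ≥0) : ℝ) := by
    intro y
    constructor
    · rintro ⟨φ, hφ, hy⟩
      choose s hs using fun j => exists_generic v hsurj {0, -φ (g j)} (γ j) (hγ j)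
      have hs1 : ∀ j, v (s j) = γ j := fun j => by
        have := hs j 0 (by simp)
        simpa using this
      have hs2 : ∀ j, v (φ (g j) + s j) = γ j := fun j => by
        have := hs j (-φ (g j)) (by simp)
        rw [Valuation.map_neg, max_eq_left (hφ j), sub_neg_eq_add, add_comm] at this
        exact this
      let Φ₀ : B →+* L := MvPolynomial.eval₂Hom (φ : R →+* L) s
      have hΦC : ∀ x, Φ₀ (MvPolynomial.C x) = φ x := fun x => MvPolynomial.eval₂Hom_C _ _ x
      have hΦX : ∀ j, Φ₀ (a j) = s j := fun j => MvPolynomial.eval₂Hom_X' _ _ j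
      have hΦb : ∀ j, Φ₀ (b j) = φ (g j) + s j := fun j => by
        rw [← hΦC, ← hΦX, ← map_add]
      have hΦw : IsUnit (Φ₀ w) := by
        rw [isUnit_iff_ne_zero, map_prod]
        refine Finset.prod_ne_zero_iff.2 fun j _ => ?_
        rw [map_mul]
        refine mul_ne_zero ?_ ?_
        · rw [← v.ne_zero_iff]
          rw [hΦX, hs1]
          exact hγ j
        · rw [← v.ne_zero_iff]
          rw [hΦb, hs2]
          exact hγ j
      let Φ₁ : R' →+* L := IsLocalization.Away.lift w hΦw
      have hΦ₁ : ∀ x, Φ₁ (algebraMap B R' x) = Φ₀ x := fun x => IsLocalization.Away.lift_eq w hΦw x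
      let Φ : R' →ₐ[K] L := { Φ₁ with
        commutes' := fun k => by
          have h1 := hΦ₁ (MvPolynomial.C (algebraMap K R k))
          have h2 : Φ₀ (MvPolynomial.C (algebraMap K R k)) = algebraMap K L k := by
            rw [hΦC, AlgHom.commutes]
          rw [h2] at h1
          exact h1 }
      have hΦ : ∀ x, Φ (algebraMap B R' x) = Φ₀ x := hΦ₁
      refine ⟨fun x => Real.log (v (Φ (F x))), ⟨Φ, fun x => rfl⟩, fun i => ?_, ?_⟩
      · have : Φ (F (.inl i)) = φ (f i) := by
          exact (hΦ (MvPolynomial.C (f i : R))).trans (hΦC _)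
        simp only [hy, this]
      · rintro (j | j)
        · have : Φ (F (.inr (.inl j))) = s j := by
            exact (hΦ (a j)).trans (hΦX j)
          simp only [this, hs1, Sum.elim_inl]
        · have : Φ (F (.inr (.inr j))) = φ (g j) + s j := by
            exact (hΦ (b j)).trans (hΦb j)
          simp only [this, hs2, Sum.elim_inr]
    · rintro ⟨z, ⟨Φ, hΦ⟩, hy, hz⟩
      let φ : R →ₐ[K] L := Φ.comp ((IsScalarTower.toAlgHom K B R').comp
        (IsScalarTower.toAlgHom K R B))
      have hφ : ∀ x, φ x = Φ (algebraMap B R' (MvPolynomial.C x)) := fun x => rfl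
      refine ⟨φ, fun j => ?_, fun i => ?_⟩
      · have h1 : v (Φ (algebraMap B R' (a j))) = γ j := by
          refine log_inj ((v.ne_zero_iff).2 ((hau j).map Φ).ne_zero) (hγ j) ?_
          exact (hΦ (.inr (.inl j))).symm.trans (hz (.inl j))
        have h2 : v (Φ (algebraMap B R' (b j))) = γ j := by
          refine log_inj ((v.ne_zero_iff).2 ((hbu j).map Φ).ne_zero) (hγ j) ?_
          exact (hΦ (.inr (.inr j))).symm.trans (hz (.inr j))
        have h3 : φ (g j) = Φ (algebraMap B R' (b j)) - Φ (algebraMap B R' (a j)) := by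
          rw [hφ, ← map_sub, ← map_sub]
          simp [a, b]
        rw [h3]
        refine (v.map_sub _ _).trans ?_
        rw [h1, h2, max_self]
      · rw [hy, hΦ]
        rfl
  refine SemiLin.of_eq ?_ key
  refine SemiLin.exists_pi (κ := Fin n ⊕ (Fin q ⊕ Fin q)) ?_
  refine SemiLin.and ?_ (SemiLin.and ?_ ?_)
  · exact hS.preimage (F := fun (z : Fin n ⊕ (Fin n ⊕ (Fin q ⊕ Fin q)) → ℝ) x => z (.inr x))
      fun k => RatAff.coord _
  · exact SemiLin.forall_fin fun i => SemiLin.eq (RatAff.coord _) (RatAff.coord _)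
  · exact SemiLin.forall_fin fun i => SemiLin.eq (RatAff.coord _) (RatAff.const _)

end
end Trop

/-! ### The dimension bound -/

namespace Trop
open NNReal

/-- A convex set covered by finitely many affine hyperplanes lies in one of them. (A degenerate
hyperplane, with `l x = 0`, is allowed.) -/
lemma exists_subset_hyperplane {V σ : Type*} [AddCommGroup V] [Module ℝ V] {P : Set V}
    (hP : Convex ℝ P) (hne : P.Nonempty) (l : σ → V →ₗ[ℝ] ℝ) (c : σ → ℝ) (S : Finset σ)
    (h : ∀ y ∈ P, ∃ x ∈ S, l x y = c x) : ∃ x ∈ S, ∀ y ∈ P, l x y = c x := by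
  classical
  induction S using Finset.induction_on with
  | empty =>
    obtain ⟨y, hy⟩ := hne
    simpa using h y hy
  | insert x S hx ih =>
    by_cases hall : ∀ y ∈ P, l x y = c x
    · exact ⟨x, Finset.mem_insert_self _ _, hall⟩
    push Not at hall
    obtain ⟨y₀, hy₀, hl⟩ := hall
    suffices ∀ y ∈ P, ∃ x ∈ S, l x y = c x by
      obtain ⟨x', hx', h'⟩ := ih this
      exact ⟨x', Finset.mem_insert_of_mem hx', h'⟩
    intro y hy
    -- `p z` is `l z - c z` along the segment from `y` to `y₀`; the product of the `p z` vanishes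
    -- on `[0, 1]`, hence one of the factors is zero
    let p : σ → Polynomial ℝ := fun z =>
      Polynomial.C (l z y - c z) + Polynomial.X * Polynomial.C (l z (y₀ - y))
    have hp : ∀ z t, (p z).eval t = l z (y + t • (y₀ - y)) - c z := fun z t => by
      simp only [p, Polynomial.eval_add, Polynomial.eval_C, Polynomial.eval_mul,
        Polynomial.eval_X, map_add, map_smul, smul_eq_mul]
      ring
    have h0 : ∏ z ∈ insert x S, p z = 0 := by
      refine Polynomial.eq_zero_of_infinite_isRoot _
        ((Set.Icc_infinite (zero_lt_one (α := ℝ))).mono fun t ht => ?_)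
      have hmem : y + t • (y₀ - y) ∈ P := hP.add_smul_sub_mem hy hy₀ ht
      obtain ⟨z, hz, hz'⟩ := h _ hmem
      change Polynomial.eval _ _ = 0
      rw [Polynomial.eval_prod]
      exact Finset.prod_eq_zero hz (by rw [hp, hz', sub_self])
    obtain ⟨z, hz, hz0⟩ := Finset.prod_eq_zero_iff.1 h0
    rcases Finset.mem_insert.1 hz with rfl | hzS
    · have := hp z 1
      rw [hz0, Polynomial.eval_zero, one_smul, add_sub_cancel] at this
      exact absurd (sub_eq_zero.1 this.symm) hl
    · refine ⟨z, hzS, ?_⟩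
      have := hp z 0
      rw [hz0, Polynomial.eval_zero, zero_smul, add_zero] at this
      exact sub_eq_zero.1 this.symm

lemma eq_zero_of_mem_direction {V : Type*} [AddCommGroup V] [Module ℝ V] {P : Set V}
    (l : V →ₗ[ℝ] ℝ) (c : ℝ) (h : ∀ y ∈ P, l y = c) :
    ∀ w ∈ (affineSpan ℝ P).direction, l w = 0 := by
  rw [direction_affineSpan, vectorSpan_def]
  have : Submodule.span ℝ (P -ᵥ P) ≤ LinearMap.ker l := by
    refine Submodule.span_le.2 ?_
    rintro _ ⟨a, ha, b, hb, rfl⟩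
    simp [h a ha, h b hb]
  exact fun w hw => this hw

/-- A subspace of `ℝⁿ` of dimension at least `k` admits `k` linearly independent coordinate
functions. -/
lemma exists_independent_coords {n k : ℕ} (W : Submodule ℝ (Fin n → ℝ))
    (hk : k ≤ Module.finrank ℝ W) :
    ∃ σ : Fin k → Fin n, LinearIndependent ℝ
      fun i => (LinearMap.proj (R := ℝ) (φ := fun _ : Fin n => ℝ) (σ i)).comp W.subtype := by
  let c : Fin n → Module.Dual ℝ W := fun i =>
    (LinearMap.proj (R := ℝ) (φ := fun _ : Fin n => ℝ) i).comp W.subtype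
  obtain ⟨κ, a, ha, hsp, hli⟩ := exists_linearIndependent' ℝ c
  have htop : Submodule.span ℝ (Set.range c) = ⊤ := by
    rw [eq_top_iff]
    rintro g -
    obtain ⟨G, hG⟩ := LinearMap.exists_extend g
    have : g = ∑ i, G (Pi.single i 1) • c i := by
      ext w
      rw [← hG]
      simp only [LinearMap.comp_apply, LinearMap.sum_apply, LinearMap.smul_apply, c,
        LinearMap.proj_apply, Submodule.subtype_apply, smul_eq_mul]
      rw [LinearMap.pi_apply_eq_sum_univ G]
      refine Finset.sum_congr rfl fun i _ => ?_
      rw [smul_eq_mul, mul_comm]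
      congr 2
      ext j
      simp [Pi.single_apply, eq_comm]
    rw [this]
    exact Submodule.sum_mem _ fun i _ => Submodule.smul_mem _ _ (Submodule.subset_span ⟨i, rfl⟩)
  have hfin : Finite κ := Finite.of_injective a ha
  have : Fintype κ := Fintype.ofFinite κ
  have hcard : Module.finrank ℝ W = Fintype.card κ := by
    rw [← Subspace.dual_finrank_eq, ← finrank_top, ← htop, ← hsp]
    exact finrank_span_eq_card hli
  have hk' : Fintype.card (Fin k) ≤ Fintype.card κ := by simpa [← hcard] using hk
  obtain ⟨e⟩ := Function.Embedding.nonempty_of_card_le hk'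
  exact ⟨fun i => a (e i), hli.comp e e.injective⟩

/-- At a zero of a polynomial the maximum of the absolute values of its terms is attained at least
twice. -/
lemma exists_two_monomials {L : Type*} [Field L] {K : Type*} [Field K] [Algebra K L]
    (v : Valuation L ℝ≥0) {τ : Type*} [Fintype τ] {Q : MvPolynomial τ K} (hQ : Q ≠ 0)
    (x : τ → L) (hx : ∀ i, x i ≠ 0) (h0 : MvPolynomial.aeval x Q = 0) :
    ∃ α ∈ Q.support, ∃ β ∈ Q.support, α ≠ β ∧
      ∑ i, ((α i : ℝ) - β i) * Real.log (v (x i)) =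
        Real.log (v (algebraMap K L (Q.coeff β))) - Real.log (v (algebraMap K L (Q.coeff α))) := by
  classical
  let t : (τ →₀ ℕ) → L := fun α => algebraMap K L (Q.coeff α) * ∏ i, x i ^ α i
  have hsum : ∑ α ∈ Q.support, t α = 0 := by
    rw [← h0, MvPolynomial.aeval_def, MvPolynomial.eval₂_eq']
  have hne : Q.support.Nonempty := MvPolynomial.support_nonempty.2 hQ
  have ht : ∀ α ∈ Q.support, t α ≠ 0 := fun α hα =>
    mul_ne_zero (by simpa using hα) (Finset.prod_ne_zero_iff.2 fun i _ => pow_ne_zero _ (hx i))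
  obtain ⟨α, hα, hmax⟩ := Q.support.exists_max_image (fun α => v (t α)) hne
  have : ∃ β ∈ Q.support, β ≠ α ∧ v (t β) = v (t α) := by
    by_contra! hcon
    have h1 := v.map_sum_eq_of_lt hα (f := t) fun β hβ => by
      rw [Finset.mem_sdiff, Finset.mem_singleton] at hβ
      exact lt_of_le_of_ne (hmax β hβ.1) (hcon β hβ.1 hβ.2)
    rw [hsum, map_zero] at h1
    exact ht α hα (v.zero_iff.1 h1.symm)
  obtain ⟨β, hβ, hne, heq⟩ := this
  refine ⟨α, hα, β, hβ, hne.symm, ?_⟩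
  have hlog : ∀ α ∈ Q.support, Real.log (v (t α)) =
      Real.log (v (algebraMap K L (Q.coeff α))) + ∑ i, (α i : ℝ) * Real.log (v (x i)) := by
    intro α hα
    have h1 : ∀ i, ((v (x i) : ℝ≥0) : ℝ) ^ α i ≠ 0 := fun i =>
      pow_ne_zero _ (by simpa using hx i)
    have h2 : ((v (algebraMap K L (Q.coeff α)) : ℝ≥0) : ℝ) ≠ 0 := by simpa using hα
    simp only [t, map_mul, map_prod, map_pow, NNReal.coe_mul, NNReal.coe_prod, NNReal.coe_pow]
    rw [Real.log_mul h2 (Finset.prod_ne_zero_iff.2 fun i _ => h1 i),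
      Real.log_prod fun i _ => h1 i]
    simp only [Real.log_pow]
  have h3 := hlog α hα
  rw [← heq, hlog β hβ] at h3
  simp only [sub_mul, Finset.sum_sub_distrib]
  linarith

/-- If every `d + 1` of the `fᵢ` satisfy an algebraic relation, then a convex set contained in the
tropicalization has dimension at most `d`. -/
lemma finrank_direction_le {L : Type*} [Field L] {K : Type*} [Field K] [Algebra K L]
    (v : Valuation L ℝ≥0) {R : Type*} [CommRing R] [Algebra K R] {n d : ℕ} (f : Fin n → Rˣ)
    (hf : ∀ σ : Fin (d + 1) → Fin n, ∃ Q : MvPolynomial (Fin (d + 1)) K, Q ≠ 0 ∧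
      MvPolynomial.aeval (fun i => (f (σ i) : R)) Q = 0)
    {P : Set (Fin n → ℝ)} (hP : Convex ℝ P)
    (hsub : ∀ y ∈ P, ∃ φ : R →ₐ[K] L, ∀ i, y i = Real.log (v (φ (f i)))) :
    Module.finrank ℝ (affineSpan ℝ P).direction ≤ d := by
  classical
  by_contra! hlt
  rcases P.eq_empty_or_nonempty with rfl | hne
  · rw [AffineSubspace.span_empty, AffineSubspace.direction_bot, finrank_bot] at hlt
    exact absurd hlt (Nat.not_lt_zero d)
  obtain ⟨σ, hσ⟩ := exists_independent_coords (affineSpan ℝ P).direction (k := d + 1) hlt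
  obtain ⟨Q, hQ, hQ0⟩ := hf σ
  let pr : Fin n → (Fin n → ℝ) →ₗ[ℝ] ℝ := LinearMap.proj
  let l : (Fin (d + 1) →₀ ℕ) × (Fin (d + 1) →₀ ℕ) → (Fin n → ℝ) →ₗ[ℝ] ℝ := fun x =>
    ∑ i, ((x.1 i : ℝ) - x.2 i) • pr (σ i)
  have hl : ∀ x y, l x y = ∑ i, ((x.1 i : ℝ) - x.2 i) * y (σ i) := fun x y => by
    simp [l, pr, LinearMap.sum_apply]
  obtain ⟨⟨α, β⟩, hx, hall⟩ := exists_subset_hyperplane hP hne l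
    (fun x => Real.log (v (algebraMap K L (Q.coeff x.2))) -
      Real.log (v (algebraMap K L (Q.coeff x.1)))) Q.support.offDiag fun y hy => by
    obtain ⟨φ, hφ⟩ := hsub y hy
    obtain ⟨α, hα, β, hβ, hne, h⟩ := exists_two_monomials v hQ (fun i => φ (f (σ i)))
      (fun i => ((f (σ i)).isUnit.map φ).ne_zero) (by
        have := congrArg φ hQ0
        rwa [map_zero, ← AlgHom.comp_apply, MvPolynomial.comp_aeval] at this)
    refine ⟨(α, β), Finset.mem_offDiag.2 ⟨hα, hβ, hne⟩, ?_⟩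
    rw [hl]
    simpa only [hφ] using h
  have hdir := eq_zero_of_mem_direction _ _ hall
  refine (Finset.mem_offDiag.1 hx).2.2 (Finsupp.ext fun i => ?_)
  have := Fintype.linearIndependent_iff.1 hσ (fun i => (α i : ℝ) - β i) (by
    ext w
    have := hdir w w.2
    rw [hl] at this
    simpa [LinearMap.sum_apply] using this) i
  exact_mod_cast sub_eq_zero.1 this

end Trop

/-! ### Conclusion -/

/-- Bieri–Groves type theorem (real-valued instance of part A of the tropicalization theorem).
Let `(K, vK)` be a real-valued field and `L` an algebraically closed extension with a valuation
`v` extending `vK` whose value group is all of `ℝ>0`.  Let `R = K[Y₁,…,Y_m]/I` (`I` prime),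
`f₁,…,fₙ` units of `R`, and `d` the transcendence degree over `K` of the subfield of `Frac R`
generated by the `fᵢ` (characterized as the maximal size of a family of elements of that
subfield algebraically independent over `K`).  Let `X` be the set of `K`-algebra homomorphisms
`R → L` satisfying a finite disjunction of finite conjunctions of conditions `v (g ℓ j) ≤ γ ℓ j`.
Then the logarithmic tropicalization `T = {(log v (φ f₁), …, log v (φ fₙ)) : φ ∈ X} ⊆ ℝⁿ` is a
finite union of ℚ-rational polyhedra, each of affine dimension at most `d`; in particular `T`
is closed. -/
theorem tropicalization_is_finite_union_of_rational_polyhedra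
    {K L : Type*} [Field K] [Field L] [IsAlgClosed L] [Algebra K L]
    (vK : Valuation K NNReal) (v : Valuation L NNReal)
    (hext : ∀ x : K, v (algebraMap K L x) = vK x)
    (hsurj : ∀ r : NNReal, r ≠ 0 → ∃ y : L, v y = r)
    (m n p q : ℕ) (I : Ideal (MvPolynomial (Fin m) K)) [I.IsPrime]
    (f : Fin n → (MvPolynomial (Fin m) K ⧸ I)ˣ)
    (g : Fin p → Fin q → (MvPolynomial (Fin m) K ⧸ I))
    (γ : Fin p → Fin q → ℝ) (hγ : ∀ ℓ j, 0 < γ ℓ j)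
    (d : ℕ)
    -- `d` is the transcendence degree over `K` of the subfield of `Frac R` generated by the `fᵢ`:
    (hd₁ : ∃ t : Fin d → ↥(IntermediateField.adjoin K
        (Set.range fun i => algebraMap (MvPolynomial (Fin m) K ⧸ I)
          (FractionRing (MvPolynomial (Fin m) K ⧸ I)) (f i))),
      AlgebraicIndependent K t)
    (hd₂ : ∀ t : Fin (d + 1) → ↥(IntermediateField.adjoin K
        (Set.range fun i => algebraMap (MvPolynomial (Fin m) K ⧸ I)
          (FractionRing (MvPolynomial (Fin m) K ⧸ I)) (f i))),
      ¬ AlgebraicIndependent K t)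
    (T : Set (Fin n → ℝ))
    (hT : T = {y | ∃ φ : (MvPolynomial (Fin m) K ⧸ I) →ₐ[K] L,
      (∃ ℓ : Fin p, ∀ j : Fin q, ((v (φ (g ℓ j)) : NNReal) : ℝ) ≤ γ ℓ j) ∧
      ∀ i, y i = Real.log ((v (φ ((f i : (MvPolynomial (Fin m) K ⧸ I)ˣ))) : NNReal) : ℝ)}) :
    (∃ (N : ℕ) (P : Fin N → Set (Fin n → ℝ)),
      T = (⋃ k, P k) ∧
      ∀ k, (∃ (J : ℕ) (a : Fin J → Fin n → ℚ) (b : Fin J → ℝ),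
          P k = {y | ∀ j, (∑ i, (a j i : ℝ) * y i) ≤ b j}) ∧
        Module.finrank ℝ (affineSpan ℝ (P k)).direction ≤ d) ∧
    IsClosed T := by
  classical
  have hdnf : Trop.SemiLin T := by
    have h := Trop.SemiLin.exists_fin (α := Fin p) fun ℓ =>
      Trop.semiLin_of_le (K := K) hsurj f (g ℓ) (fun j => ⟨γ ℓ j, (hγ ℓ j).le⟩)
        fun j h0 => (hγ ℓ j).ne' (congrArg NNReal.toReal h0)
    refine h.of_eq fun y => ?_
    rw [hT]
    constructor
    · rintro ⟨φ, ⟨ℓ, hℓ⟩, hy⟩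
      exact ⟨ℓ, φ, fun j => hℓ j, hy⟩
    · rintro ⟨ℓ, φ, hℓ, hy⟩
      exact ⟨φ, ⟨ℓ, fun j => hℓ j⟩, hy⟩
  obtain ⟨F, hF⟩ := hdnf.exists_dnf
  have hrel : ∀ σ : Fin (d + 1) → Fin n, ∃ Q : MvPolynomial (Fin (d + 1)) K, Q ≠ 0 ∧
      MvPolynomial.aeval (fun i => (f (σ i) : MvPolynomial (Fin m) K ⧸ I)) Q = 0 := by
    intro σ
    have h := hd₂ fun i => ⟨_, IntermediateField.subset_adjoin K _ ⟨σ i, rfl⟩⟩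
    rw [algebraicIndependent_iff] at h
    push Not at h
    obtain ⟨Q, hQ0, hQ⟩ := h
    refine ⟨Q, hQ, FaithfulSMul.algebraMap_injective _
      (FractionRing (MvPolynomial (Fin m) K ⧸ I)) ?_⟩
    have h1 := congrArg (IntermediateField.val _) hQ0
    rw [map_zero, ← AlgHom.comp_apply, MvPolynomial.comp_aeval] at h1
    rw [map_zero, ← MvPolynomial.aeval_algebraMap_apply]
    exact h1
  have hTF : T = ⋃ k : Fin F.card, Trop.polyh (F.equivFin.symm k : Finset _) := by
    ext y
    rw [hF, Set.mem_iUnion]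
    constructor
    · rintro ⟨s, hs, hy⟩
      exact ⟨F.equivFin ⟨s, hs⟩, by simpa using hy⟩
    · rintro ⟨k, hk⟩
      exact ⟨_, (F.equivFin.symm k).2, hk⟩
  refine ⟨⟨F.card, fun k => Trop.polyh (F.equivFin.symm k : Finset _), hTF, fun k => ⟨?_, ?_⟩⟩, ?_⟩
  · let s : Finset ((Fin n → ℚ) × ℝ) := F.equivFin.symm k
    refine ⟨s.card, fun j => (s.equivFin.symm j : (Fin n → ℚ) × ℝ).1,
      fun j => (s.equivFin.symm j : (Fin n → ℚ) × ℝ).2, ?_⟩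
    ext y
    constructor
    · exact fun hy j => hy _ (s.equivFin.symm j).2
    · intro hy c hc
      simpa using hy (s.equivFin ⟨c, hc⟩)
  · refine Trop.finrank_direction_le v f hrel (Trop.convex_polyh _) fun y hy => ?_
    have hyT : y ∈ T := (hF y).2 ⟨_, (F.equivFin.symm k).2, hy⟩
    rw [hT] at hyT
    obtain ⟨φ, -, hφ⟩ := hyT
    exact ⟨φ, hφ⟩
  · rw [hTF]
    exact isClosed_iUnion_of_finite fun k => Trop.isClosed_polyh _
end
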